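/- arXiv:math/0610493 — 3 statements merged into one kernel-verified Lean document; each statement's English description precedes it below -/
import Mathlib

section
/- Let Q be a connected algebraic group over 𝕜 with Lie algebra q, set l = ind q, and suppose that the coadjoint representation of q has the codim-2 property and that the transcendence degree of the invariant algebra 𝕜[q*]^Q equals ind q. Then for any homogeneous algebraically independent polynomials f₁,…,f_l ∈ 𝕜[q*]^Q one has Σ_{i=1}^l deg f_i ≥ (dim q + ind q)/2. -/
/-!
Let `n = dim q`, `l = ind q`, `S = 𝕜[q*]`.  Let `M` be the skew `n × n` matrix over `S` with entries
`⁅b i, b j⁆` and `F` the `l × n` Jacobian matrix of `f₁,…,f_l`.  Invariance of the `fᵢ` says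
`M * Fᵀ = 0`, hence also `F * M = 0` by skewness.  By the Jacobian criterion in characteristic zero
(`jacobian_rows_indep`) the rows of `F` are linearly independent.

The classical argument compares `df₁ ∧ … ∧ df_l` with the top nonvanishing power of the Poisson
bivector.  Here the latter is replaced by the determinants `D(A, B) = det (M + A * B)`, where `A` is
`n × l` and `B` is `l × n`, and the former by `δ(A, B) = det (F * A) * det (B * Fᵀ)`.  These two
families are proportional: `D(A, B) * δ(A₁, B₁) = D(A₁, B₁) * δ(A, B)`
(`det_add_mul_proportional`, a consequence of the matrix determinant lemma).

At a regular point `ξ` the matrix `M(ξ)` has corank exactly `l`, so `D(A, B)(ξ) ≠ 0` for some constant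
`A`, `B`.  By the codim-2 property no prime polynomial therefore divides all the `D(A, B)` with
constant `A`, `B`, and unique factorization in `S` turns the proportionality into
`D(A₁, B₁) ∣ δ(A₁, B₁)` (`dvd_of_proportional`), for constant `A₁`, `B₁` with `D(A₁, B₁) ≠ 0`.

It remains to compare degrees.  Proportionality also gives `D(x A₁, B₁) = x ^ l * D(A₁, B₁)` for a
coordinate function `x`; the left side is the determinant of a matrix of linear forms, so `D(A₁, B₁)`
has degree `n - l`.  On the other hand `δ(A₁, B₁)` has degree at most `2 * ∑ (deg fᵢ - 1)`.
Thus `n - l ≤ 2 * ∑ deg fᵢ - 2 * l`.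
-/

/-!
STATEMENT 0: Let Q be a connected algebraic group over an algebraically closed field 𝕜
of characteristic zero, with Lie algebra q, and set l = ind q.  Suppose the coadjoint
representation of q has the codim-2 property and that trdeg 𝕜[q*]^Q = ind q.  Then for
any homogeneous algebraically independent f₁,…,f_l ∈ 𝕜[q*]^Q one has
  Σ deg fᵢ ≥ (dim q + ind q)/2.

Formalization conventions (standard for a *connected* group Q):
* Polynomial functions on q* are represented by `MvPolynomial (Fin n) 𝕜`, the
  variable `X i` being the linear function ξ ↦ ξ(b i) for a basis `b` of q.
* Q-invariance of a polynomial is its infinitesimal q-invariance: annihilation by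
  every coadjoint vector field `coadDeriv b w`, w ∈ q (this characterises invariance
  under a connected group).
* The index `ind q` is the minimal dimension of a coadjoint stabiliser
  q_ξ = {x ∈ q | ξ∘ad(x) = 0}; ξ is Q-regular iff its stabiliser has this minimal
  dimension (equivalently, its coadjoint orbit has maximal dimension).
* The codim-2 property ("the non-regular set, a Zariski-closed cone, contains no
  divisor") is encoded as: the zero locus of every prime polynomial contains a
  regular point.
* trdeg 𝕜[q*]^Q = l is encoded as: there are l algebraically independent invariants,
  and no l+1 invariants are algebraically independent.
* The inequality is stated multiplied by 2 to avoid division in ℕ.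
-/

open MvPolynomial Module

noncomputable section

variable {𝕜 : Type*} [Field 𝕜] [IsAlgClosed 𝕜] [CharZero 𝕜]
variable {q : Type*} [LieRing q] [LieAlgebra 𝕜 q] [Module.Finite 𝕜 q]
variable {n : ℕ}

/-- The linear polynomial function on q* corresponding to `z ∈ q`. -/
def linPoly (b : Basis (Fin n) 𝕜 q) (z : q) : MvPolynomial (Fin n) 𝕜 :=
  ∑ i, b.repr z i • X i

/-- The infinitesimal coadjoint action of `w ∈ q` on polynomial functions on q*
(the derivation sending the linear function `z ∈ q` to the linear function `⁅w, z⁆`). -/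
def coadDeriv (b : Basis (Fin n) 𝕜 q) (w : q) (p : MvPolynomial (Fin n) 𝕜) :
    MvPolynomial (Fin n) 𝕜 :=
  ∑ i, pderiv i p * linPoly b ⁅w, b i⁆

/-- Invariance under the coadjoint representation of the connected group `Q`. -/
def IsCoadInvariant (b : Basis (Fin n) 𝕜 q) (p : MvPolynomial (Fin n) 𝕜) : Prop :=
  ∀ w : q, coadDeriv b w p = 0

/-- Evaluation of a polynomial function at a point ξ ∈ q*. -/
def evalDual (b : Basis (Fin n) 𝕜 q) (ξ : Dual 𝕜 q) (p : MvPolynomial (Fin n) 𝕜) : 𝕜 :=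
  eval (fun i => ξ (b i)) p

/-- The stabiliser q_ξ = {x ∈ q | ξ(⁅x,y⁆) = 0 ∀ y} of ξ ∈ q* for the coadjoint
representation. -/
def coadStab (𝕜 : Type*) {q : Type*} [Field 𝕜] [LieRing q] [LieAlgebra 𝕜 q]
    (ξ : Dual 𝕜 q) : Submodule 𝕜 q where
  carrier := {x | ∀ y : q, ξ ⁅x, y⁆ = 0}
  add_mem' := by
    intro a c ha hc y
    rw [add_lie, map_add, ha y, hc y, add_zero]
  zero_mem' := by intro y; rw [zero_lie, map_zero]
  smul_mem' := by
    intro t x hx y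
    rw [smul_lie, map_smul, hx y, smul_zero]

/-- The index of q: the minimal dimension of a coadjoint stabiliser. -/
def lieIndex (𝕜 q : Type*) [Field 𝕜] [LieRing q] [LieAlgebra 𝕜 q] : ℕ :=
  ⨅ ξ : Dual 𝕜 q, finrank 𝕜 (coadStab 𝕜 ξ)

/-- ξ ∈ q* is Q-regular iff its coadjoint orbit has maximal dimension, i.e. its
stabiliser has minimal dimension. -/
def IsCoadRegular (𝕜 : Type*) {q : Type*} [Field 𝕜] [LieRing q] [LieAlgebra 𝕜 q]
    (ξ : Dual 𝕜 q) : Prop :=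
  finrank 𝕜 (coadStab 𝕜 ξ) = lieIndex 𝕜 q

/-- The codim-2 property: q* ∖ q*_reg contains no divisor, i.e. the zero set of any
prime polynomial meets the set of regular elements. -/
def HasCodimTwoProperty (b : Basis (Fin n) 𝕜 q) : Prop :=
  ∀ p : MvPolynomial (Fin n) 𝕜, Prime p →
    ∃ ξ : Dual 𝕜 q, evalDual b ξ p = 0 ∧ IsCoadRegular 𝕜 ξ


/-! ### Determinants of low-rank perturbations -/

section

variable {R : Type*} [CommRing R] {l m : Type*} [Fintype l] [DecidableEq l] [Fintype m]
  [DecidableEq m]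

theorem det_fromBlocks_antidiag (P T U : Matrix l l R) :
    (Matrix.fromBlocks P T (-U) 0).det = T.det * U.det := by
  have hJ : (Matrix.fromBlocks 0 1 (-1) 0 : Matrix (l ⊕ l) (l ⊕ l) R) =
      Matrix.fromBlocks 1 1 0 1 * Matrix.fromBlocks 1 0 (-1) 1 * Matrix.fromBlocks 1 1 0 1 := by
    simp [Matrix.fromBlocks_multiply]
  have h : Matrix.fromBlocks P T (-U) 0 =
      Matrix.fromBlocks T (-P) 0 U * Matrix.fromBlocks 0 1 (-1) 0 := by
    simp [Matrix.fromBlocks_multiply]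
  rw [h, hJ]
  simp only [Matrix.det_mul, Matrix.det_fromBlocks_zero₂₁, Matrix.det_fromBlocks_zero₁₂,
    Matrix.det_one, mul_one]

/-- With `X = M + A₁ * B₁`, the matrix `M + A * B` is a perturbation of `X` of rank at most `2 * l`,
and `F * X = (F * A₁) * B₁`, `X * Fᵀ = A₁ * (B₁ * Fᵀ)`.  The matrix determinant lemma thus reduces
the claim to a `2 × 2` block determinant with a vanishing diagonal block. -/
theorem det_add_mul_proportional_of_isUnit (M : Matrix m m R) (F : Matrix l m R)
    (hFM : F * M = 0) (hMF : M * F.transpose = 0) (A A₁ : Matrix m l R) (B B₁ : Matrix l m R)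
    (hX : IsUnit (M + A₁ * B₁).det) (hU : IsUnit (F * A₁).det)
    (hT : IsUnit (B₁ * F.transpose).det) :
    (M + A * B).det * ((F * A₁).det * (B₁ * F.transpose).det) =
      (M + A₁ * B₁).det * ((F * A).det * (B * F.transpose).det) := by
  set X := M + A₁ * B₁ with hXdef
  set U := F * A₁ with hUdef
  set T := B₁ * F.transpose with hTdef
  have h1 : B₁ * X⁻¹ = U⁻¹ * F := by
    have : U⁻¹ * F * X = B₁ := by
      rw [Matrix.mul_assoc, hXdef, Matrix.mul_add, hFM, zero_add, ← Matrix.mul_assoc F,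
        ← Matrix.mul_assoc, Matrix.nonsing_inv_mul _ hU, Matrix.one_mul]
    rw [← this, Matrix.mul_assoc, Matrix.mul_nonsing_inv _ hX, Matrix.mul_one]
  have h2 : X⁻¹ * A₁ = F.transpose * T⁻¹ := by
    have : X * (F.transpose * T⁻¹) = A₁ := by
      rw [← Matrix.mul_assoc, hXdef, Matrix.add_mul, hMF, zero_add, Matrix.mul_assoc A₁,
        Matrix.mul_assoc, Matrix.mul_nonsing_inv _ hT, Matrix.mul_one]
    rw [← this, ← Matrix.mul_assoc, Matrix.nonsing_inv_mul _ hX, Matrix.one_mul]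
  have h3 : M + A * B = X + Matrix.fromCols A A₁ * Matrix.fromRows B (-B₁) := by
    rw [Matrix.fromCols_mul_fromRows, hXdef, Matrix.mul_neg]; abel
  have h4 : 1 + Matrix.fromRows B (-B₁) * X⁻¹ * Matrix.fromCols A A₁ =
      Matrix.fromBlocks (1 + B * X⁻¹ * A) (B * F.transpose * T⁻¹) (-(U⁻¹ * (F * A))) 0 := by
    rw [Matrix.fromRows_mul, Matrix.fromRows_mul_fromCols, ← Matrix.fromBlocks_one,
      Matrix.fromBlocks_add]
    congr 1
    · rw [Matrix.mul_assoc, h2, zero_add, Matrix.mul_assoc]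
    · rw [Matrix.neg_mul, h1, zero_add, Matrix.neg_mul, Matrix.mul_assoc]
    · rw [Matrix.mul_assoc, h2, Matrix.neg_mul, ← Matrix.mul_assoc, Matrix.mul_nonsing_inv _ hT,
        add_neg_cancel]
  rw [h3, Matrix.det_add_mul _ _ hX, h4, det_fromBlocks_antidiag, Matrix.det_mul, Matrix.det_mul]
  have e1 : T⁻¹.det * T.det = 1 := by
    rw [← Matrix.det_mul, Matrix.nonsing_inv_mul _ hT, Matrix.det_one]
  have e2 : U⁻¹.det * U.det = 1 := by
    rw [← Matrix.det_mul, Matrix.nonsing_inv_mul _ hU, Matrix.det_one]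
  linear_combination X.det * (F * A).det * (B * F.transpose).det * (T⁻¹.det * T.det * e2 + e1)

/-- If `F` annihilates `M` on both sides, `det (M + A * B)` is proportional to
`det (F * A) * det (B * Fᵀ)` as `A` and `B` vary. -/
theorem det_add_mul_proportional [IsDomain R] (M : Matrix m m R) (F : Matrix l m R)
    (hFM : F * M = 0) (hMF : M * F.transpose = 0) (A A₁ : Matrix m l R) (B B₁ : Matrix l m R)
    (hX : (M + A₁ * B₁).det ≠ 0) (hU : (F * A₁).det ≠ 0)
    (hT : (B₁ * F.transpose).det ≠ 0) :
    (M + A * B).det * ((F * A₁).det * (B₁ * F.transpose).det) =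
      (M + A₁ * B₁).det * ((F * A).det * (B * F.transpose).det) := by
  let φ := algebraMap R (FractionRing R)
  have hφ : Function.Injective φ := IsFractionRing.injective R (FractionRing R)
  have hu : ∀ x : R, x ≠ 0 → IsUnit (φ x) := fun x hx =>
    isUnit_iff_ne_zero.2 ((map_ne_zero_iff φ hφ).2 hx)
  have key := det_add_mul_proportional_of_isUnit (M.map φ) (F.map φ)
    (by rw [← Matrix.map_mul, hFM]; simp)
    (by rw [← Matrix.transpose_map, ← Matrix.map_mul, hMF]; simp)
    (A.map φ) (A₁.map φ) (B.map φ) (B₁.map φ)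
  simp only [← Matrix.transpose_map, ← Matrix.map_mul, ← Matrix.map_add φ (map_add φ)] at key
  simp only [← RingHom.mapMatrix_apply, ← RingHom.map_det] at key
  apply hφ
  simpa only [map_mul] using key (hu _ hX) (hu _ hU) (hu _ hT)

theorem det_ne_zero_of_rows_indep [IsDomain R] (M : Matrix m m R) (F : Matrix l m R)
    (hFM : F * M = 0) (hF : ∀ w, Matrix.vecMul w F = 0 → w = 0)
    (A : Matrix m l R) (B : Matrix l m R) (hX : (M + A * B).det ≠ 0) : (F * A).det ≠ 0 := by
  intro h
  obtain ⟨w, hw0, hw⟩ := Matrix.exists_vecMul_eq_zero_iff.2 h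
  apply hw0
  apply hF
  apply Matrix.eq_zero_of_vecMul_eq_zero hX
  rw [Matrix.vecMul_vecMul, Matrix.mul_add, hFM, zero_add, ← Matrix.mul_assoc,
    ← Matrix.vecMul_vecMul, hw, Matrix.zero_vecMul]

end

section

variable {K : Type*} [Field K] {m : Type*} [Fintype m] [DecidableEq m]

/-- A square matrix of corank `l` becomes invertible after adding some product `A * B` of rank `l`:
let `B` be injective on the kernel and let `A` span a complement of the range. -/
theorem exists_det_add_mul_ne_zero {l : ℕ} (N : Matrix m m K)
    (hN : finrank K (LinearMap.ker N.mulVecLin) = l) :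
    ∃ (A : Matrix m (Fin l) K) (B : Matrix (Fin l) m K), (N + A * B).det ≠ 0 := by
  have hQ : finrank K ((m → K) ⧸ LinearMap.range N.mulVecLin) = l := by
    have h1 := LinearMap.finrank_range_add_finrank_ker N.mulVecLin
    have h2 := Submodule.finrank_quotient_add_finrank (LinearMap.range N.mulVecLin)
    omega
  let e₁ : LinearMap.ker N.mulVecLin ≃ₗ[K] (Fin l → K) :=
    LinearEquiv.ofFinrankEq _ _ (by simp [hN])
  let e₂ : (Fin l → K) ≃ₗ[K] ((m → K) ⧸ LinearMap.range N.mulVecLin) :=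
    LinearEquiv.ofFinrankEq _ _ (by simp [hQ])
  obtain ⟨β, hβ⟩ := LinearMap.exists_extend (e₁ : LinearMap.ker N.mulVecLin →ₗ[K] (Fin l → K))
  obtain ⟨σ, hσ⟩ := (LinearMap.range N.mulVecLin).mkQ.exists_rightInverse_of_surjective
    (Submodule.range_mkQ _)
  let α := σ ∘ₗ (e₂ : (Fin l → K) →ₗ[K] _)
  refine ⟨LinearMap.toMatrix' α, LinearMap.toMatrix' β, fun h => ?_⟩
  obtain ⟨v, hv0, hv⟩ := Matrix.exists_mulVec_eq_zero_iff.2 h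
  apply hv0
  rw [Matrix.add_mulVec, ← Matrix.mulVec_mulVec, LinearMap.toMatrix'_mulVec,
    LinearMap.toMatrix'_mulVec] at hv
  have hβv : β v = 0 := by
    have : (LinearMap.range N.mulVecLin).mkQ (α (β v)) = 0 := by
      rw [Submodule.mkQ_apply, Submodule.Quotient.mk_eq_zero]
      refine ⟨-v, ?_⟩
      simp only [Matrix.mulVecLin_apply, Matrix.mulVec_neg]
      exact neg_eq_of_add_eq_zero_right hv
    have h' : (LinearMap.range N.mulVecLin).mkQ (α (β v)) = e₂ (β v) :=
      LinearMap.congr_fun hσ (e₂ (β v))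
    rw [h'] at this
    simpa using this
  rw [hβv, map_zero, add_zero] at hv
  have hk : v ∈ LinearMap.ker N.mulVecLin := hv
  have h' : β v = e₁ ⟨v, hk⟩ := LinearMap.congr_fun hβ ⟨v, hk⟩
  rw [hβv] at h'
  have := (LinearEquiv.map_eq_zero_iff e₁).1 h'.symm
  simpa using this

end

/-! ### The Jacobian criterion -/

section

variable {k : Type*} [Field k] [CharZero k]

/-- In characteristic zero a derivation vanishing on `R₀` vanishes on every element `s` algebraic
over `R₀`: if `P` is a polynomial of minimal degree with `P(s) = 0`, then `P'(s) * D s = 0` and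
`P'(s) ≠ 0`. -/
theorem derivation_eq_zero_of_isAlgebraic {S : Type*} [CommRing S] [IsDomain S] [Algebra k S]
    (R₀ : Subalgebra k S) [Algebra.IsAlgebraic R₀ S] (D : Derivation k S S)
    (hD : ∀ r ∈ R₀, D r = 0) : D = 0 := by
  let D' : Derivation R₀ S S := Derivation.mk'
    { toFun := D
      map_add' := map_add D
      map_smul' := fun r s => by
        simp [Algebra.smul_def, hD _ r.2, show algebraMap R₀ S r = r from rfl] }
    (fun a b => D.leibniz a b)
  ext s
  change D' s = 0
  have hs : ∃ n, ∃ P : Polynomial R₀, P ≠ 0 ∧ Polynomial.aeval s P = 0 ∧ P.natDegree = n := by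
    obtain ⟨P, hP, hPs⟩ := Algebra.IsAlgebraic.isAlgebraic (R := R₀) s
    exact ⟨_, P, hP, hPs, rfl⟩
  classical
  obtain ⟨P, hP0, hPs, hPn⟩ := Nat.find_spec hs
  have hmin := fun {m} => Nat.find_min (m := m) hs
  have hchar : CharZero R₀ := charZero_of_injective_algebraMap (algebraMap k R₀).injective
  have hdeg : P.natDegree ≠ 0 := by
    intro h0
    rw [Polynomial.eq_C_of_natDegree_eq_zero h0] at hPs hP0
    simp only [Polynomial.aeval_C] at hPs
    apply hP0
    have : P.coeff 0 = 0 := Subtype.ext hPs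
    simp [this]
  have hd : Polynomial.aeval s P.derivative ≠ 0 := by
    intro h
    have hlt := Polynomial.natDegree_derivative_lt hdeg
    refine hmin (hPn ▸ hlt) ⟨_, ?_, h, rfl⟩
    intro h0
    exact hdeg (Polynomial.derivative_eq_zero.1 h0)
  have := D'.map_aeval P s
  rw [hPs, map_zero, smul_eq_mul] at this
  exact (mul_eq_zero.1 this.symm).resolve_left hd

/-- The gradients of algebraically independent polynomials are linearly independent.  The family is
completed to a transcendence basis, which has `n` elements; a vector `v` in the kernel of its square
Jacobian matrix defines a derivation `∑ vᵢ ∂ᵢ` killing that basis, hence zero. -/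
theorem jacobian_rows_indep {n : ℕ} {ι : Type*} [Fintype ι] {f : ι → MvPolynomial (Fin n) k}
    (hf : AlgebraicIndependent k f) :
    LinearIndependent (MvPolynomial (Fin n) k) (fun i j => pderiv j (f i)) := by
  classical
  obtain ⟨T, hfT, hT⟩ := exists_isTranscendenceBasis_superset hf.to_subtype_range
  have hcard := hT.lift_cardinalMk_eq (IsTranscendenceBasis.mvPolynomial (Fin n) k)
  obtain ⟨e⟩ := Cardinal.lift_mk_eq'.1 hcard
  have halg := hT.isAlgebraic
  rw [Subtype.range_coe] at halg
  let J : Matrix (Fin n) (Fin n) (MvPolynomial (Fin n) k) :=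
    fun i j => pderiv j (e.symm i : MvPolynomial (Fin n) k)
  have hJ : J.det ≠ 0 := by
    intro h
    obtain ⟨v, hv0, hv⟩ := Matrix.exists_mulVec_eq_zero_iff.2 h
    apply hv0
    have hDa : ∀ p, mkDerivation k v p = ∑ i, pderiv i p * v i := by
      intro p
      have hsum : ∀ p, (∑ i, v i • (pderiv i : Derivation k (MvPolynomial (Fin n) k)
          (MvPolynomial (Fin n) k))) p = ∑ i, pderiv i p * v i := by
        intro p
        have := congrFun (map_sum Derivation.coeFnAddMonoidHom
          (fun i => v i • (pderiv i : Derivation k (MvPolynomial (Fin n) k)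
            (MvPolynomial (Fin n) k))) Finset.univ) p
        rw [Finset.sum_apply] at this
        refine this.trans (Finset.sum_congr rfl fun i _ => ?_)
        exact mul_comm _ _
      rw [← hsum]
      congr 1
      apply MvPolynomial.derivation_ext
      intro i
      rw [hsum]
      simp [pderiv_X, Pi.single_apply]
    have hD : mkDerivation k v = 0 := by
      apply derivation_eq_zero_of_isAlgebraic (Algebra.adjoin k T)
      intro r hr
      induction hr using Algebra.adjoin_induction with
      | mem x hx =>
        rw [hDa]
        have := congrFun hv (e ⟨x, hx⟩)
        simpa [J, Matrix.mulVec, dotProduct] using this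
      | algebraMap r => simp
      | add x y _ _ hx hy => simp [hx, hy]
      | mul x y _ _ hx hy => simp [hx, hy]
    funext i
    have := congrArg (fun D => D (X i)) hD
    simpa using this
  have hrows := Matrix.linearIndependent_rows_of_det_ne_zero hJ
  have hinj : Function.Injective (fun i => e ⟨f i, hfT ⟨i, rfl⟩⟩) := by
    intro i j hij
    exact hf.injective (congrArg Subtype.val (e.injective hij))
  have := hrows.comp _ hinj
  have heq : (fun i j => pderiv j (f i)) = (fun i => J i) ∘ fun i => e ⟨f i, hfT ⟨i, rfl⟩⟩ := by
    funext i j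
    simp [J]
  rw [heq]
  exact this

end

/-! ### The structure matrix of `q` -/

/-- A determinant is homogeneous if the entries of row `i` are homogeneous of degree `d i`. -/
theorem isHomogeneous_det {k : Type*} [CommRing k] {σ m : Type*} [Fintype m] [DecidableEq m]
    (A : Matrix m m (MvPolynomial σ k)) (d : m → ℕ)
    (h : ∀ i j, (A i j).IsHomogeneous (d i)) : A.det.IsHomogeneous (∑ i, d i) := by
  rw [Matrix.det_apply']
  refine IsHomogeneous.sum _ _ _ fun σ _ => ?_
  rw [← Equiv.sum_comp σ d, ← map_intCast (C : k →+* MvPolynomial _ k)]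
  exact IsHomogeneous.C_mul (IsHomogeneous.prod _ _ _ fun i _ => h _ _) _

/-- The structure matrix `(⁅b i, b j⁆)` of `q`, whose entries are linear functions on `q*`; this is
the matrix of the Poisson bivector on `q*`. -/
def coadMatrix (b : Basis (Fin n) 𝕜 q) : Matrix (Fin n) (Fin n) (MvPolynomial (Fin n) 𝕜) :=
  fun i j => linPoly b ⁅b i, b j⁆

/-- The Jacobian matrix of a family of polynomials; its rows are the gradients. -/
def jacobianMatrix {k : Type*} [CommRing k] {n : ℕ} {ι : Type*} (f : ι → MvPolynomial (Fin n) k) :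
    Matrix ι (Fin n) (MvPolynomial (Fin n) k) :=
  fun i j => pderiv j (f i)

/-- A matrix of scalars, viewed as a matrix of constant polynomials. -/
def constMatrix {k : Type*} [CommRing k] {r s : Type*} (n : ℕ) (A : Matrix r s k) :
    Matrix r s (MvPolynomial (Fin n) k) :=
  A.map C

theorem coadMatrix_transpose (b : Basis (Fin n) 𝕜 q) :
    (coadMatrix b).transpose = -coadMatrix b := by
  ext1 i j
  simp only [Matrix.transpose_apply, Matrix.neg_apply, coadMatrix, linPoly]
  rw [← lie_skew (b j) (b i), map_neg]
  simp

theorem linPoly_isHomogeneous (b : Basis (Fin n) 𝕜 q) (z : q) : (linPoly b z).IsHomogeneous 1 := by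
  refine IsHomogeneous.sum _ _ _ fun i _ => ?_
  rw [smul_eq_C_mul]
  exact isHomogeneous_C_mul_X _ _

theorem coadMatrix_mul_jacobian (b : Basis (Fin n) 𝕜 q) {ι : Type*}
    (f : ι → MvPolynomial (Fin n) 𝕜) (hinv : ∀ i, IsCoadInvariant b (f i)) :
    coadMatrix b * (jacobianMatrix f).transpose = 0 := by
  ext1 i k
  rw [Matrix.zero_apply, ← hinv k (b i), coadDeriv, Matrix.mul_apply]
  exact Finset.sum_congr rfl fun j _ => mul_comm _ _

theorem jacobian_mul_coadMatrix (b : Basis (Fin n) 𝕜 q) {ι : Type*}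
    (f : ι → MvPolynomial (Fin n) 𝕜) (hinv : ∀ i, IsCoadInvariant b (f i)) :
    jacobianMatrix f * coadMatrix b = 0 := by
  rw [← Matrix.transpose_inj, Matrix.transpose_mul, coadMatrix_transpose, Matrix.neg_mul,
    coadMatrix_mul_jacobian b f hinv, neg_zero, Matrix.transpose_zero]

theorem eval_linPoly (b : Basis (Fin n) 𝕜 q) (ξ : Dual 𝕜 q) (z : q) :
    eval (fun i => ξ (b i)) (linPoly b z) = ξ z := by
  have h := congrArg ξ (b.sum_repr z)
  rw [map_sum] at h
  rw [← h]
  simp only [linPoly, map_sum, smul_eval, eval_X, map_smul, smul_eq_mul]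

/-- In the coordinates given by `b`, the kernel of the structure matrix at `ξ` is the stabiliser
`q_ξ`. -/
theorem finrank_ker_eval_coadMatrix (b : Basis (Fin n) 𝕜 q) (ξ : Dual 𝕜 q) :
    finrank 𝕜 (LinearMap.ker
      ((coadMatrix b).map (eval fun i => ξ (b i))).mulVecLin) = finrank 𝕜 (coadStab 𝕜 ξ) := by
  rw [← LinearEquiv.finrank_map_eq b.equivFun (coadStab 𝕜 ξ)]
  suffices h : LinearMap.ker ((coadMatrix b).map (eval fun i => ξ (b i))).mulVecLin =
      (coadStab 𝕜 ξ).map (b.equivFun : q →ₗ[𝕜] Fin n → 𝕜) by rw [h]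
  ext v
  obtain ⟨z, rfl⟩ := b.equivFun.surjective v
  rw [Submodule.mem_map_equiv, LinearEquiv.symm_apply_apply, LinearMap.mem_ker,
    Matrix.mulVecLin_apply]
  have key : ∀ i, ((coadMatrix b).map (eval fun i => ξ (b i))).mulVec (b.equivFun z) i
      = ξ ⁅b i, z⁆ := by
    intro i
    conv_rhs => rw [← b.sum_repr z, lie_sum]
    simp [Matrix.mulVec, dotProduct, coadMatrix, eval_linPoly, mul_comm]
  constructor
  · intro h
    have h' : ∀ i, ξ ⁅b i, z⁆ = 0 := fun i => by rw [← key, h]; rfl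
    intro y
    rw [← lie_skew, ← b.sum_repr y, sum_lie]
    simp [h']
  · intro h
    funext i
    rw [key, ← lie_skew, map_neg, h (b i)]
    simp

/-- At a regular point, a suitable constant perturbation of rank `ind q` makes the structure
matrix invertible. -/
theorem exists_eval_det_ne_zero (b : Basis (Fin n) 𝕜 q) {ξ : Dual 𝕜 q}
    (hξ : IsCoadRegular 𝕜 ξ) :
    ∃ (A : Matrix (Fin n) (Fin (lieIndex 𝕜 q)) 𝕜) (B : Matrix (Fin (lieIndex 𝕜 q)) (Fin n) 𝕜),
      evalDual b ξ (coadMatrix b + constMatrix n A * constMatrix n B).det ≠ 0 := by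
  obtain ⟨A, B, h⟩ := exists_det_add_mul_ne_zero _ ((finrank_ker_eval_coadMatrix b ξ).trans hξ)
  refine ⟨A, B, ?_⟩
  have hC : ∀ {r s : Type} (N : Matrix r s 𝕜),
      (constMatrix n N).map (eval fun i => ξ (b i)) = N := by
    intro r s N
    ext
    simp [constMatrix]
  rw [evalDual, RingHom.map_det, RingHom.mapMatrix_apply, Matrix.map_add _ (map_add _),
    Matrix.map_mul, hC, hC]
  exact h

theorem lieIndex_le : lieIndex 𝕜 q ≤ finrank 𝕜 q :=
  (ciInf_le (OrderBot.bddBelow _) (0 : Dual 𝕜 q)).trans (Submodule.finrank_le _)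

/-- Under the codim-2 property the determinants `det (M + A * B)`, with `A` and `B` constant, have no
common prime factor, so a divisor of all their products with `δ` divides `δ`. -/
theorem dvd_of_proportional (b : Basis (Fin n) 𝕜 q) (hcodim2 : HasCodimTwoProperty b)
    (D δ : MvPolynomial (Fin n) 𝕜) (hD : D ≠ 0)
    (h : ∀ (A : Matrix (Fin n) (Fin (lieIndex 𝕜 q)) 𝕜)
      (B : Matrix (Fin (lieIndex 𝕜 q)) (Fin n) 𝕜),
      D ∣ (coadMatrix b + constMatrix n A * constMatrix n B).det * δ) : D ∣ δ := by
  obtain ⟨a, e, c, hrel, rfl, rfl⟩ := UniqueFactorizationMonoid.exists_reduced_factors D hD δ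
  have hc : c ≠ 0 := left_ne_zero_of_mul hD
  have ha : a ≠ 0 := right_ne_zero_of_mul hD
  apply mul_dvd_mul_left
  by_cases hu : IsUnit a
  · exact hu.dvd
  exfalso
  obtain ⟨p, hp, hpa⟩ := WfDvdMonoid.exists_irreducible_factor hu ha
  obtain ⟨ξ, hξp, hξ⟩ := hcodim2 p hp.prime
  obtain ⟨A, B, hAB⟩ := exists_eval_det_ne_zero b hξ
  have h1 : a ∣ (coadMatrix b + constMatrix n A * constMatrix n B).det * e := by
    have := h A B
    rw [mul_left_comm] at this
    exact (mul_dvd_mul_iff_left hc).1 this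
  rcases hp.prime.dvd_or_dvd (hpa.trans h1) with h2 | h2
  · obtain ⟨g, hg⟩ := h2
    apply hAB
    rw [hg, evalDual, map_mul]
    exact mul_eq_zero_of_left hξp _
  · exact hp.not_isUnit (hrel hpa h2)

/-- For `d i = 0` the truncated degree `d i - 1` is harmless: the `i`-th gradient vanishes. -/
theorem jac_mul_const_isHomogeneous {ι : Type*} [Fintype ι] [DecidableEq ι]
    (f : ι → MvPolynomial (Fin n) 𝕜) (d : ι → ℕ) (hhom : ∀ i, (f i).IsHomogeneous (d i))
    (A : Matrix (Fin n) ι 𝕜) :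
    (jacobianMatrix f * constMatrix n A).det.IsHomogeneous (∑ i, (d i - 1)) := by
  apply isHomogeneous_det
  intro i j
  rw [Matrix.mul_apply]
  refine IsHomogeneous.sum _ _ _ fun s _ => ?_
  rw [mul_comm]
  exact IsHomogeneous.C_mul (hhom i).pderiv _

theorem sum_degrees_ge_of_codim_two (b : Basis (Fin n) 𝕜 q)
    (hcodim2 : HasCodimTwoProperty b)
    -- trdeg 𝕜[q*]^Q = ind q :
    (htrdeg₁ : ∃ g : Fin (lieIndex 𝕜 q) → MvPolynomial (Fin n) 𝕜,
      (∀ i, IsCoadInvariant b (g i)) ∧ AlgebraicIndependent 𝕜 g)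
    (htrdeg₂ : ∀ g : Fin (lieIndex 𝕜 q + 1) → MvPolynomial (Fin n) 𝕜,
      (∀ i, IsCoadInvariant b (g i)) → ¬ AlgebraicIndependent 𝕜 g)
    -- the polynomials f₁,…,f_l :
    (f : Fin (lieIndex 𝕜 q) → MvPolynomial (Fin n) 𝕜) (d : Fin (lieIndex 𝕜 q) → ℕ)
    (hinv : ∀ i, IsCoadInvariant b (f i))
    (hhom : ∀ i, (f i).IsHomogeneous (d i))
    (hai : AlgebraicIndependent 𝕜 f) :
    finrank 𝕜 q + lieIndex 𝕜 q ≤ 2 * ∑ i, d i := by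
  have hn : finrank 𝕜 q = n := by simp [finrank_eq_card_basis b]
  have hle : lieIndex 𝕜 q ≤ finrank 𝕜 q := lieIndex_le
  rcases Nat.eq_zero_or_pos n with h0 | hpos
  · omega
  set M := coadMatrix b with hM
  set F := jacobianMatrix f with hFdef
  have hMF : M * F.transpose = 0 := coadMatrix_mul_jacobian b f hinv
  have hFM : F * M = 0 := jacobian_mul_coadMatrix b f hinv
  have hF : ∀ w, Matrix.vecMul w F = 0 → w = 0 := fun w hw =>
    funext (Fintype.linearIndependent_iff.1 (jacobian_rows_indep hai) w
      (by rw [← hw, Matrix.vecMul_eq_sum]; rfl))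
  obtain ⟨ξ₀, hξ₀⟩ : ∃ ξ : Dual 𝕜 q, IsCoadRegular 𝕜 ξ :=
    Nat.sInf_mem (Set.range_nonempty fun ξ : Dual 𝕜 q => finrank 𝕜 (coadStab 𝕜 ξ))
  obtain ⟨A, B, hAB⟩ := exists_eval_det_ne_zero b hξ₀
  set A₁ : Matrix (Fin n) (Fin (lieIndex 𝕜 q)) (MvPolynomial (Fin n) 𝕜) := constMatrix n A with hA₁
  set B₁ : Matrix (Fin (lieIndex 𝕜 q)) (Fin n) (MvPolynomial (Fin n) 𝕜) := constMatrix n B with hB₁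
  have hD : (M + A₁ * B₁).det ≠ 0 := fun h => hAB (by rw [← hM, h, evalDual, map_zero])
  have hU : (F * A₁).det ≠ 0 := det_ne_zero_of_rows_indep M F hFM hF A₁ B₁ hD
  have hTt : (F * B₁.transpose).det ≠ 0 := by
    apply det_ne_zero_of_rows_indep M.transpose F _ hF B₁.transpose A₁.transpose
    · rwa [← Matrix.transpose_mul, ← Matrix.transpose_add, Matrix.det_transpose]
    · rw [← Matrix.transpose_inj, Matrix.transpose_mul, Matrix.transpose_transpose, hMF,
        Matrix.transpose_zero]
  have hTeq : (B₁ * F.transpose).det = (F * B₁.transpose).det := by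
    rw [← Matrix.det_transpose, Matrix.transpose_mul, Matrix.transpose_transpose]
  have hT : (B₁ * F.transpose).det ≠ 0 := hTeq ▸ hTt
  have hprop := fun A' B' => det_add_mul_proportional M F hFM hMF A' A₁ B' B₁ hD hU hT
  have hδ : (F * A₁).det * (B₁ * F.transpose).det ≠ 0 := mul_ne_zero hU hT
  have hdvd := dvd_of_proportional b hcodim2 _ _ hD fun A' B' =>
    Dvd.intro _ (hprop (constMatrix n A') (constMatrix n B')).symm
  -- homogenising the perturbation with a coordinate function determines the degree of the
  -- determinant
  let x : MvPolynomial (Fin n) 𝕜 := X ⟨0, hpos⟩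
  have hx : x ≠ 0 := X_ne_zero _
  have hxD : (M + (x • A₁) * B₁).det = (M + A₁ * B₁).det * x ^ lieIndex 𝕜 q := by
    have := hprop (x • A₁) B₁
    rw [Matrix.mul_smul, Matrix.det_smul, Fintype.card_fin] at this
    apply mul_right_cancel₀ hδ
    rw [this]
    ring
  have hxhom : (M + (x • A₁) * B₁).det.IsHomogeneous n := by
    have := isHomogeneous_det (M + (x • A₁) * B₁) (fun _ => 1) (by
      intro i j
      rw [Matrix.add_apply, Matrix.mul_apply]
      refine (linPoly_isHomogeneous b _).add (IsHomogeneous.sum _ _ _ fun s _ => ?_)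
      simp only [Matrix.smul_apply, hA₁, hB₁, constMatrix, Matrix.map_apply, smul_eq_mul]
      exact ((isHomogeneous_X 𝕜 _).mul (isHomogeneous_C _ _)).mul (isHomogeneous_C _ _))
    simpa using this
  have hdegD : (M + A₁ * B₁).det.totalDegree + lieIndex 𝕜 q = n := by
    have hxl : (x ^ lieIndex 𝕜 q).totalDegree = lieIndex 𝕜 q := by simp [x, totalDegree_X_pow]
    have h1 := totalDegree_mul_of_isDomain hD (pow_ne_zero (lieIndex 𝕜 q) hx)
    rw [← hxD, hxhom.totalDegree (hxD ▸ mul_ne_zero hD (pow_ne_zero _ hx)), hxl] at h1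
    exact h1.symm
  have hdegδ : ((F * A₁).det * (B₁ * F.transpose).det).totalDegree ≤
      ∑ i, (d i - 1) + ∑ i, (d i - 1) := by
    refine (totalDegree_mul _ _).trans (add_le_add ?_ ?_)
    · exact (jac_mul_const_isHomogeneous f d hhom A).totalDegree_le
    · rw [hTeq]
      exact (jac_mul_const_isHomogeneous f d hhom B.transpose).totalDegree_le
  have hdeg : (M + A₁ * B₁).det.totalDegree ≤
      ((F * A₁).det * (B₁ * F.transpose).det).totalDegree := by
    obtain ⟨g, hg⟩ := hdvd
    rw [hg] at hδ ⊢
    rw [totalDegree_mul_of_isDomain hD (right_ne_zero_of_mul hδ)]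
    exact Nat.le_add_right _ _
  -- an algebraically independent polynomial is not constant
  have hd : ∀ i, 1 ≤ d i := by
    intro i
    by_contra hlt
    have hdi : d i = 0 := by omega
    have h1 := hhom i
    rw [hdi, ← totalDegree_zero_iff_isHomogeneous, totalDegree_eq_zero_iff_eq_C] at h1
    apply hai.transcendental i
    rw [h1]
    exact isAlgebraic_algebraMap _
  have hsum : ∑ i, d i = ∑ i, (d i - 1) + lieIndex 𝕜 q := by
    have : ∑ i, d i = ∑ i, ((d i - 1) + 1) :=
      Finset.sum_congr rfl fun i _ => (Nat.sub_add_cancel (hd i)).symm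
    rw [this, Finset.sum_add_distrib]
    simp
  omega

end
end

section
/- Let Q be a connected algebraic group over 𝕜 with Lie algebra q, set l = ind q, and suppose that the coadjoint representation of q has the codim-2 property and that the transcendence degree of 𝕜[q*]^Q equals ind q. If f₁,…,f_l ∈ 𝕜[q*]^Q are homogeneous, algebraically independent, and satisfy Σ_{i=1}^l deg f_i = (dim q + ind q)/2, then 𝕜[q*]^Q is freely generated by f₁,…,f_l (i.e. it is the polynomial algebra 𝕜[f₁,…,f_l]), and moreover ξ ∈ q*_reg if and only if the differentials (df₁)_ξ,…,(df_l)_ξ are linearly independent. -/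
/-!
Let `P` be the skew matrix of linear functions `⁅b i, b j⁆` on `q*` and let `F` be the Jacobian
matrix of `f₁, …, f_l`. A polynomial `h` is invariant iff `P ∇h = 0`; in particular `P F = 0`.

Let `m_I` be the maximal minor of `F` in the rows `I`, and `u_{IJ}` the determinant of `P` bordered
by the standard basis vectors indexed by `I` and `J`. Since `P` is skew and `P F = 0`, the arrays
`u_{IJ}` and `m_I m_J` are proportional (`det_bord_proportional`). A point is regular iff some
`u_{IJ}` does not vanish there (`isCoadRegular_iff`), so the codim-2 property says that no prime
divides all `u_{IJ}`, whence `m_I m_J = p u_{IJ}` for a polynomial `p`. The degree of `u_{IJ}` is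
`n - l`, and that of `m_I m_J` is `2 (∑ dᵢ - l)`, which is also `n - l` by hypothesis. Some `m_I` is
nonzero by the Jacobian criterion (`linearIndependent_jacobian`), so `p` is a nonzero constant
(`exists_minor_eq`). Hence a point is regular iff some `m_I` does not vanish there, which is the
second assertion.

For the first assertion, the `m_I` have no common prime factor, so Cramer's rule gives polynomials
`aᵢ` with `∇h = ∑ aᵢ ∇fᵢ` for every invariant `h` (`exists_grad_eq`). Symmetry of the second
derivatives of `h` implies that the `aᵢ` are invariant (`isCoadInvariant_coeff`). If `h` is
homogeneous of degree `e`, Euler's identity gives `e h = ∑ dᵢ aᵢ fᵢ` with `aᵢ` of degree `e - dᵢ`,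
and induction on `e` shows that `h` is a polynomial in the `fᵢ` (`mem_adjoin_of_isHom`).
-/

/-!
STATEMENT 1: With Q, q, l = ind q as in Statement 0 (codim-2 property for the coadjoint
representation and trdeg 𝕜[q*]^Q = ind q), if f₁,…,f_l ∈ 𝕜[q*]^Q are homogeneous,
algebraically independent and Σ deg fᵢ = (dim q + ind q)/2, then 𝕜[q*]^Q is freely
generated by f₁,…,f_l, and ξ ∈ q*_reg iff the differentials (df₁)_ξ,…,(df_l)_ξ are
linearly independent.

Conventions are as in Statement 0 (connected-group invariance = infinitesimal
invariance, etc.).  "Freely generated" is expressed as: the fᵢ are algebraically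
independent (a hypothesis here) and every invariant lies in the subalgebra they
generate.  The differential (df)_ξ is the gradient vector (∂f/∂xᵢ (ξ))ᵢ.
The degree equality is stated multiplied by 2 to avoid division in ℕ.
-/

open MvPolynomial Module

noncomputable section


noncomputable section

variable {𝕜 : Type*} [Field 𝕜] [IsAlgClosed 𝕜] [CharZero 𝕜]
variable {q : Type*} [LieRing q] [LieAlgebra 𝕜 q] [Module.Finite 𝕜 q]
variable {n : ℕ}

/-- The differential (gradient) of a polynomial function at ξ ∈ q*. -/
def gradAt (b : Basis (Fin n) 𝕜 q) (ξ : Dual 𝕜 q) (p : MvPolynomial (Fin n) 𝕜) :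
    Fin n → 𝕜 :=
  fun i => evalDual b ξ (pderiv i p)

namespace CoadFree

/-! ### Bordered determinants and maximal minors -/

section LinAlg
open Matrix

/-- The square matrix `[[P, E_I], [E_Jᵀ, 0]]`, where `E_I` has the standard basis vectors `e_{I a}`
as columns. Up to sign its determinant is the minor of `P` obtained by deleting the rows `I` and the
columns `J`; it vanishes when `I` or `J` is not injective. -/
def bord {R : Type*} [CommRing R] {n l : ℕ} (P : Matrix (Fin n) (Fin n) R) (I J : Fin l → Fin n) :
    Matrix (Fin n ⊕ Fin l) (Fin n ⊕ Fin l) R :=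
  fromBlocks P ((1 : Matrix (Fin n) (Fin n) R).submatrix id I)
    ((1 : Matrix (Fin n) (Fin n) R).submatrix J id) 0

theorem one_submatrix_mul' {R : Type*} [CommRing R] {n l m : ℕ} (J : Fin l → Fin n)
    (F : Matrix (Fin n) (Fin m) R) :
    (1 : Matrix (Fin n) (Fin n) R).submatrix J id * F = F.submatrix J id := by
  ext i j; simp [Matrix.mul_apply, Matrix.one_apply]

theorem bord_transpose {R : Type*} [CommRing R] {n l : ℕ} (P : Matrix (Fin n) (Fin n) R)
    (I J : Fin l → Fin n) : (bord P I J)ᵀ = bord Pᵀ J I := by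
  simp [bord, fromBlocks_transpose]

/-- If `P F = 0` then, for fixed `I`, the bordered determinants of `P` are proportional, as functions
of `J`, to the maximal minors of `F`. The matrices `bord P I J'` and `bord P I J` share their upper
rows, so `bord P I J' * adjugate (bord P I J)` is block triangular with scalar upper block; its lower
block carries the minor `J` of `F` to a multiple of the minor `J'`, and the claim follows on taking
determinants. -/
theorem det_bord_mul_minor_of_ne_zero {R : Type*} [CommRing R] [IsDomain R] {n l : ℕ}
    {P : Matrix (Fin n) (Fin n) R} {F : Matrix (Fin n) (Fin l) R} (hF : P * F = 0)
    (I J J' : Fin l → Fin n) (h0 : (bord P I J).det ≠ 0) :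
    (bord P I J').det * (F.submatrix J id).det = (bord P I J).det * (F.submatrix J' id).det := by
  set A := bord P I J with hA
  set A' := bord P I J' with hA'
  set δ := A.det with hδ
  set M := A' * A.adjugate with hM
  have hrow : ∀ i j, M (Sum.inl i) j =
      (δ • (1 : Matrix (Fin n ⊕ Fin l) (Fin n ⊕ Fin l) R)) (Sum.inl i) j := by
    intro i j
    rw [← mul_adjugate A, hM, Matrix.mul_apply, Matrix.mul_apply]
    refine Finset.sum_congr rfl fun k _ => ?_
    cases k <;> simp [hA, hA', bord]
  have hMb : M = fromBlocks (δ • 1) 0 M.toBlocks₂₁ M.toBlocks₂₂ := by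
    ext i j
    rcases i with i | i
    · rw [hrow]
      rcases j with j | j <;> simp [Matrix.one_apply]
    · rcases j with j | j <;> simp [toBlocks₂₁, toBlocks₂₂]
  have key : ∀ K : Fin l → Fin n, bord P I K * fromRows F (0 : Matrix (Fin l) (Fin l) R)
      = fromRows (0 : Matrix (Fin n) (Fin l) R) (F.submatrix K id) := by
    intro K
    rw [bord, fromBlocks_mul_fromRows, hF, one_submatrix_mul']
    simp
  have hS : M.toBlocks₂₂ * F.submatrix J id = δ • F.submatrix J' id := by
    have h1 : M * fromRows (0 : Matrix (Fin n) (Fin l) R) (F.submatrix J id)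
        = δ • fromRows (0 : Matrix (Fin n) (Fin l) R) (F.submatrix J' id) := by
      rw [← key J, ← key J', hM, Matrix.mul_assoc, ← Matrix.mul_assoc A.adjugate, adjugate_mul,
        Matrix.smul_mul, Matrix.one_mul, Matrix.mul_smul]
    rw [hMb, fromBlocks_mul_fromRows] at h1
    ext i j
    have := congrFun (congrFun h1 (Sum.inr i)) j
    simpa using this
  have hd1 : A'.det * δ ^ (n + l - 1) = δ ^ n * M.toBlocks₂₂.det := by
    have := congrArg Matrix.det hMb
    rw [det_fromBlocks_zero₁₂, hM, det_mul, det_adjugate] at this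
    simpa using this
  have hd2 : M.toBlocks₂₂.det * (F.submatrix J id).det = δ ^ l * (F.submatrix J' id).det := by
    have := congrArg Matrix.det hS
    simpa [det_mul] using this
  rcases Nat.eq_zero_or_pos (n + l) with h | h
  · obtain ⟨rfl, rfl⟩ : n = 0 ∧ l = 0 := by omega
    simp [A, A', δ]
  · apply mul_left_cancel₀ (pow_ne_zero (n + l - 1) h0)
    have e : δ ^ (n + l - 1) * δ = δ ^ n * δ ^ l := by
      rw [← pow_succ, ← pow_add]; congr 1; omega
    linear_combination (F.submatrix J id).det * hd1 + δ ^ n * hd2 - (F.submatrix J' id).det * e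

theorem det_bord_mul_minor {R : Type*} [CommRing R] [IsDomain R] {n l : ℕ}
    {P : Matrix (Fin n) (Fin n) R} {F : Matrix (Fin n) (Fin l) R} (hF : P * F = 0)
    (I J J' : Fin l → Fin n) :
    (bord P I J').det * (F.submatrix J id).det = (bord P I J).det * (F.submatrix J' id).det := by
  by_cases h0 : (bord P I J).det ≠ 0
  · exact det_bord_mul_minor_of_ne_zero hF I J J' h0
  by_cases h1 : (bord P I J').det ≠ 0
  · exact (det_bord_mul_minor_of_ne_zero hF I J' J h1).symm
  rw [not_ne_iff] at h0 h1
  rw [h0, h1, zero_mul, zero_mul]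

/-- For skew `P` with `P F = 0`, the array of bordered determinants of `P` is proportional to the
rank one array of products of two maximal minors of `F`. -/
theorem det_bord_proportional {R : Type*} [CommRing R] [IsDomain R] {n l : ℕ}
    {P : Matrix (Fin n) (Fin n) R} {F : Matrix (Fin n) (Fin l) R} (hP : Pᵀ = -P) (hF : P * F = 0)
    (I J I' J' : Fin l → Fin n) :
    (bord P I J).det * ((F.submatrix I' id).det * (F.submatrix J' id).det) =
      (bord P I' J').det * ((F.submatrix I id).det * (F.submatrix J id).det) := by
  have h1 := det_bord_mul_minor hF I J' J
  have h2 : (bord P I J').det * (F.submatrix I' id).det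
      = (bord P I' J').det * (F.submatrix I id).det := by
    have := det_bord_mul_minor (P := Pᵀ) (F := F) (by rw [hP, Matrix.neg_mul, hF, neg_zero]) J' I' I
    rwa [← bord_transpose, ← bord_transpose, det_transpose, det_transpose] at this
  linear_combination (F.submatrix I' id).det * h1 + (F.submatrix J id).det * h2

theorem eq_zero_of_det_bord_ne_zero {R : Type*} [CommRing R] [IsDomain R] {n l : ℕ}
    {P : Matrix (Fin n) (Fin n) R} {I J : Fin l → Fin n} (h : (bord P I J).det ≠ 0)
    {y : Fin n → R} (hy : P *ᵥ y = 0) (hJ : ∀ a, y (J a) = 0) : y = 0 := by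
  by_contra hne
  refine h (exists_mulVec_eq_zero_iff.1 ⟨Sum.elim y 0, ?_, ?_⟩)
  · intro h0
    exact hne (funext fun i => congrFun h0 (Sum.inl i))
  · rw [bord, fromBlocks_mulVec]
    ext i
    rcases i with i | a
    · simpa using congrFun hy i
    · simpa [Matrix.mulVec, dotProduct, Matrix.one_apply] using hJ a

theorem exists_minor_ne_zero {K : Type*} [Field K] {n l : ℕ} {N : Matrix (Fin n) (Fin l) K}
    (h : LinearIndependent K N.col) : ∃ I : Fin l → Fin n, (N.submatrix I id).det ≠ 0 := by
  obtain ⟨κ, a, ha, hspan, hli⟩ := exists_linearIndependent' K N.row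
  have hr : finrank K (Submodule.span K (Set.range N.row)) = l := by
    rw [← rank_eq_finrank_span_row, rank_eq_finrank_span_cols, finrank_span_eq_card h,
      Fintype.card_fin]
  have : Finite κ := Finite.of_injective a ha
  have := Fintype.ofFinite κ
  have hc : Fintype.card κ = l := by
    rw [← finrank_span_eq_card hli, hspan, hr]
  let e : Fin l ≃ κ := (Fintype.equivFinOfCardEq hc).symm
  refine ⟨a ∘ e, ?_⟩
  have : LinearIndependent K (N.submatrix (a ∘ e) id).row := hli.comp e e.injective
  rw [linearIndependent_rows_iff_isUnit, isUnit_iff_isUnit_det] at this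
  exact this.ne_zero

theorem linearIndependent_col_of_minor {K : Type*} [Field K] {n l : ℕ}
    {N : Matrix (Fin n) (Fin l) K} {I : Fin l → Fin n} (h : (N.submatrix I id).det ≠ 0) :
    LinearIndependent K N.col := by
  have h1 := linearIndependent_cols_of_det_ne_zero h
  exact LinearIndependent.of_comp (LinearMap.funLeft K K I) h1

theorem exists_minor_ne_zero_of_domain {R : Type*} [CommRing R] [IsDomain R] {n l : ℕ}
    {N : Matrix (Fin n) (Fin l) R} (h : LinearIndependent R N.col) :
    ∃ I : Fin l → Fin n, (N.submatrix I id).det ≠ 0 := by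
  let K := FractionRing R
  let φ : (Fin n → R) →ₗ[R] (Fin n → K) := (Algebra.linearMap R K).compLeft (Fin n)
  have hφ : LinearMap.ker φ = ⊥ := by
    rw [LinearMap.ker_eq_bot]
    intro x y hxy
    ext i
    exact IsFractionRing.injective R K (congrFun hxy i)
  have h1 : LinearIndependent K (N.map (algebraMap R K)).col :=
    (LinearIndependent.iff_fractionRing R K).1 (h.map' φ hφ)
  obtain ⟨I, hI⟩ := exists_minor_ne_zero h1
  refine ⟨I, fun h0 => hI ?_⟩
  have := RingHom.map_det (algebraMap R K) (N.submatrix I id)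
  rw [h0, map_zero] at this
  exact this.symm

/-- A skew matrix with kernel of dimension `l` has a nonzero bordered determinant of border size `l`:
choose `J` such that the coordinates `J` are independent on the kernel. By skewness the same `J`
serves for the rows. -/
theorem exists_det_bord_ne_zero {K : Type*} [Field K] {n l : ℕ} {A : Matrix (Fin n) (Fin n) K}
    (hA : Aᵀ = -A) (hl : finrank K (LinearMap.ker A.mulVecLin) = l) :
    ∃ I J : Fin l → Fin n, (bord A I J).det ≠ 0 := by
  let B := Module.finBasisOfFinrankEq K (LinearMap.ker A.mulVecLin) hl
  let N : Matrix (Fin n) (Fin l) K := Matrix.of fun i a => (B a : Fin n → K) i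
  have hN : LinearIndependent K N.col :=
    B.linearIndependent.map' (LinearMap.ker A.mulVecLin).subtype (Submodule.ker_subtype _)
  obtain ⟨J, hJ⟩ := exists_minor_ne_zero hN
  have hAN : A * N = 0 := by
    ext i a
    exact congrFun (LinearMap.mem_ker.1 (B a).2) i
  refine ⟨J, J, fun h0 => ?_⟩
  obtain ⟨v, hv0, hv⟩ := exists_mulVec_eq_zero_iff.2 h0
  obtain ⟨x, y, rfl⟩ : ∃ x y, v = Sum.elim x y := ⟨v ∘ Sum.inl, v ∘ Sum.inr, by simp⟩
  rw [bord, fromBlocks_mulVec] at hv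
  have h1 : A *ᵥ x + (1 : Matrix (Fin n) (Fin n) K).submatrix id J *ᵥ y = 0 :=
    funext fun i => congrFun hv (Sum.inl i)
  have h2 : ∀ a, x (J a) = 0 := fun a => by
    simpa [Matrix.mulVec, dotProduct, Matrix.one_apply] using congrFun hv (Sum.inr a)
  have hNA : Nᵀ * A = 0 := by
    have := congrArg Matrix.transpose hAN
    rw [transpose_mul, hA, Matrix.mul_neg, transpose_zero, neg_eq_zero] at this
    exact this
  have hy : y = 0 := by
    have h3 := congrArg (Nᵀ *ᵥ ·) h1
    simp only [mulVec_add, mulVec_mulVec, hNA, zero_mulVec, zero_add, mulVec_zero] at h3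
    have h4 : Nᵀ * (1 : Matrix (Fin n) (Fin n) K).submatrix id J = (N.submatrix J id)ᵀ := by
      ext i j; simp [Matrix.mul_apply, Matrix.one_apply]
    rw [h4] at h3
    exact eq_zero_of_mulVec_eq_zero (by rwa [det_transpose]) h3
  have hx : x = 0 := by
    rw [hy, mulVec_zero, add_zero] at h1
    let z : LinearMap.ker A.mulVecLin := ⟨x, h1⟩
    have hz : x = N *ᵥ (B.repr z) := by
      have := congrArg Subtype.val (B.sum_repr z)
      change _ = x at this
      rw [Submodule.coe_sum] at this
      rw [← this]
      ext i
      simp only [Finset.sum_apply, Submodule.coe_smul, Pi.smul_apply, smul_eq_mul, Matrix.mulVec,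
        dotProduct, N, Matrix.of_apply]
      exact Finset.sum_congr rfl fun a _ => mul_comm _ _
    have hz0 : (B.repr z : Fin l → K) = 0 := by
      refine eq_zero_of_mulVec_eq_zero hJ ?_
      ext a
      have := congrFun hz (J a)
      rw [h2] at this
      exact this.symm
    rw [hz, hz0, mulVec_zero]
  apply hv0
  rw [hx, hy]
  ext i; cases i <;> rfl

theorem finrank_ker_le {K : Type*} [Field K] {n l : ℕ} {A : Matrix (Fin n) (Fin n) K}
    {I J : Fin l → Fin n} (h : (bord A I J).det ≠ 0) :
    finrank K (LinearMap.ker A.mulVecLin) ≤ l := by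
  let ψ : LinearMap.ker A.mulVecLin →ₗ[K] (Fin l → K) :=
    LinearMap.funLeft K K J ∘ₗ (LinearMap.ker A.mulVecLin).subtype
  have : Function.Injective ψ := by
    rw [← LinearMap.ker_eq_bot, LinearMap.ker_eq_bot']
    intro m hm
    exact Subtype.ext (eq_zero_of_det_bord_ne_zero h m.2 fun a => congrFun hm a)
  simpa using LinearMap.finrank_le_finrank_of_injective this

/-- In a factorial ring, a family proportional to a family without common prime factor is a multiple
of it. -/
theorem exists_eq_mul_of_proportional {R ι : Type*} [CommRing R] [IsDomain R]
    [UniqueFactorizationMonoid R] [Fintype ι] {u v : ι → R}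
    (huv : ∀ i j, u i * v j = u j * v i) (hu0 : ∃ i, u i ≠ 0)
    (hu : ∀ p, Prime p → ∃ i, ¬ p ∣ u i) : ∃ c, ∀ i, v i = c * u i := by
  classical
  let _ : NormalizedGCDMonoid R := Classical.choice inferInstance
  obtain ⟨i₀, hi₀⟩ := hu0
  have hg : IsUnit (Finset.univ.gcd u) := by
    by_contra hg
    have hne : Finset.univ.gcd u ≠ 0 := fun h =>
      hi₀ (Finset.gcd_eq_zero_iff.1 h i₀ (Finset.mem_univ _))
    obtain ⟨p, hp, hpd⟩ := WfDvdMonoid.exists_irreducible_factor hg hne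
    obtain ⟨i, hi⟩ := hu p hp.prime
    exact hi (hpd.trans (Finset.gcd_dvd (Finset.mem_univ i)))
  have hd : u i₀ ∣ v i₀ := by
    have h1 : u i₀ ∣ Finset.univ.gcd fun k => v i₀ * u k :=
      Finset.dvd_gcd fun k _ => ⟨v k, by rw [mul_comm, huv]⟩
    have h2 := h1.trans (Finset.gcd_mul_left' (s := Finset.univ) (f := u) (v i₀)).dvd
    exact hg.dvd_mul_right.1 h2
  obtain ⟨c, hc⟩ := hd
  refine ⟨c, fun i => mul_left_cancel₀ hi₀ ?_⟩
  rw [huv, hc]; ring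

end LinAlg

/-! ### Homogeneous polynomials with integer degrees -/

section Homog

/-- Homogeneity of degree `m ∈ ℤ`. Integer degrees keep subtraction of degrees exact; for `m < 0`
the only homogeneous polynomial is `0`. -/
abbrev IsHom {𝕜 : Type*} [CommRing 𝕜] {n : ℕ} (p : MvPolynomial (Fin n) 𝕜) (m : ℤ) : Prop :=
  IsWeightedHomogeneous (fun _ : Fin n => (1 : ℤ)) p m

variable {𝕜 : Type*} [Field 𝕜] {n : ℕ}

theorem weight_one_int (s : Fin n →₀ ℕ) :
    Finsupp.weight (fun _ : Fin n => (1 : ℤ)) s = (s.degree : ℤ) := by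
  simp [Finsupp.weight_apply, Finsupp.sum, Finsupp.degree_apply]

theorem isHom_iff {p : MvPolynomial (Fin n) 𝕜} {m : ℕ} : IsHom p (m : ℤ) ↔ p.IsHomogeneous m := by
  simp only [IsHom, IsHomogeneous, IsWeightedHomogeneous, weight_one_int, Nat.cast_inj,
    Finsupp.degree_eq_weight_one]
  rfl

theorem IsHom.eq_zero_of_neg {p : MvPolynomial (Fin n) 𝕜} {m : ℤ} (h : IsHom p m) (hm : m < 0) :
    p = 0 := by
  ext s
  by_contra hs
  have := h hs
  rw [weight_one_int] at this
  omega

theorem IsHom.totalDegree_eq {p : MvPolynomial (Fin n) 𝕜} {m : ℤ} (h : IsHom p m) (hp : p ≠ 0) :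
    (p.totalDegree : ℤ) = m := by
  rcases lt_or_ge m 0 with hm | hm
  · exact absurd (h.eq_zero_of_neg hm) hp
  · lift m to ℕ using hm
    rw [(isHom_iff.1 h).totalDegree hp]

/-- A matrix whose `(i, j)` entry has degree `r i + c j` has a homogeneous determinant. -/
theorem isHom_det {m : Type*} [Fintype m] [DecidableEq m]
    {M : Matrix m m (MvPolynomial (Fin n) 𝕜)} {r c : m → ℤ}
    (h : ∀ i j, IsHom (M i j) (r i + c j)) : IsHom M.det (∑ i, r i + ∑ i, c i) := by
  rw [Matrix.det_apply]
  refine IsWeightedHomogeneous.sum _ _ _ fun σ _ => ?_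
  have h1 : IsHom (∏ i, M (σ i) i) (∑ i, r i + ∑ i, c i) := by
    have := IsWeightedHomogeneous.prod Finset.univ (fun i => M (σ i) i) _ fun i _ => h (σ i) i
    rwa [Finset.sum_add_distrib, Equiv.sum_comp σ r] at this
  rcases Int.units_eq_one_or (Equiv.Perm.sign σ) with hs | hs
  · rw [hs, one_smul]; exact h1
  · rw [hs, Units.neg_smul, one_smul]; exact h1.neg

/-- A linear map shifting degrees by `k` commutes with taking homogeneous components. -/
theorem component_map (L : MvPolynomial (Fin n) 𝕜 →ₗ[𝕜] MvPolynomial (Fin n) 𝕜) (k : ℤ)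
    (hL : ∀ p m, IsHom p m → IsHom (L p) (m + k)) (p : MvPolynomial (Fin n) 𝕜) (m : ℤ) :
    weightedHomogeneousComponent (fun _ : Fin n => (1 : ℤ)) (m + k) (L p) =
      L (weightedHomogeneousComponent (fun _ : Fin n => (1 : ℤ)) m p) := by
  induction p using MvPolynomial.induction_on' with
  | add p q hp hq => simp only [map_add, hp, hq]
  | monomial s c =>
    have h1 : IsHom (monomial s c) (Finsupp.weight (fun _ : Fin n => (1 : ℤ)) s) :=
      isWeightedHomogeneous_monomial _ _ _ rfl
    by_cases hm : m = Finsupp.weight (fun _ : Fin n => (1 : ℤ)) s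
    · subst hm
      rw [(hL _ _ h1).weightedHomogeneousComponent_same, h1.weightedHomogeneousComponent_same]
    · rw [h1.weightedHomogeneousComponent_ne m hm, map_zero,
        (hL _ _ h1).weightedHomogeneousComponent_ne (m + k)]
      intro h; apply hm; linarith

theorem eq_C_of_mul_eq {p u v : MvPolynomial (Fin n) 𝕜} {m : ℤ} (hu : IsHom u m) (hv : IsHom v m)
    (hv0 : v ≠ 0) (h : v = p * u) : ∃ c : 𝕜, c ≠ 0 ∧ p = C c := by
  have hp0 : p ≠ 0 := by rintro rfl; exact hv0 (by rw [h, zero_mul])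
  have hu0 : u ≠ 0 := by rintro rfl; exact hv0 (by rw [h, mul_zero])
  have h1 := hv.totalDegree_eq hv0
  have h2 := hu.totalDegree_eq hu0
  rw [h, totalDegree_mul_of_isDomain hp0 hu0] at h1
  have h3 : p.totalDegree = 0 := by omega
  have h4 := totalDegree_eq_zero_iff_eq_C.1 h3
  refine ⟨_, fun h0 => hp0 ?_, h4⟩
  rw [h4, h0, C_0]

end Homog

/-! ### The Jacobian criterion in characteristic zero -/

section Jacobian
variable {𝕜 : Type*} [Field 𝕜] [CharZero 𝕜] {n : ℕ}

/-- In characteristic zero a derivation vanishing on a subalgebra `A` vanishes on every element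
algebraic over `A`: differentiate a relation of minimal degree. -/
theorem derivation_eq_zero_of_isAlgebraic
    {A : Subalgebra 𝕜 (MvPolynomial (Fin n) 𝕜)}
    (D : Derivation 𝕜 (MvPolynomial (Fin n) 𝕜) (MvPolynomial (Fin n) 𝕜))
    (hD : ∀ a ∈ A, D a = 0) {x : MvPolynomial (Fin n) 𝕜} (hx : IsAlgebraic A x) : D x = 0 := by
  classical
  let D' : Derivation A (MvPolynomial (Fin n) 𝕜) (MvPolynomial (Fin n) 𝕜) :=
    Derivation.mk'
      { toFun := D
        map_add' := map_add D
        map_smul' := fun a y => by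
          change D ((a : MvPolynomial (Fin n) 𝕜) * y) = (a : MvPolynomial (Fin n) 𝕜) * D y
          rw [D.leibniz, hD a a.2]; simp }
      (fun a b => D.leibniz a b)
  have hex : ∃ d, ∃ P : Polynomial A, P ≠ 0 ∧ Polynomial.aeval x P = 0 ∧ P.natDegree = d := by
    obtain ⟨P, h0, h1⟩ := hx
    exact ⟨_, P, h0, h1, rfl⟩
  obtain ⟨P, hP0, hPx, hPd⟩ := Nat.find_spec hex
  have hdeg : P.natDegree ≠ 0 := by
    intro h
    rw [Polynomial.eq_C_of_natDegree_eq_zero h, Polynomial.aeval_C] at hPx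
    have hc : P.coeff 0 = 0 := Subtype.ext hPx
    apply hP0
    rw [Polynomial.eq_C_of_natDegree_eq_zero h, hc, Polynomial.C_0]
  have hd0 : Polynomial.aeval x P.derivative ≠ 0 := by
    intro h
    have hlt := Polynomial.natDegree_derivative_lt hdeg
    rw [hPd] at hlt
    refine Nat.find_min hex hlt ⟨P.derivative, ?_, h, rfl⟩
    intro h0
    exact hdeg (Polynomial.derivative_eq_zero.1 h0)
  have := D'.map_aeval P x
  rw [hPx, map_zero] at this
  rcases smul_eq_zero.1 this.symm with h | h
  · exact absurd h hd0
  · exact h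

/-- The gradients of algebraically independent polynomials are linearly independent. Extend the family
to a transcendence basis, which has `n` elements; a vector in the left kernel of the square Jacobian
matrix gives a derivation vanishing on this basis, hence everywhere. -/
theorem linearIndependent_jacobian {l : ℕ} {f : Fin l → MvPolynomial (Fin n) 𝕜}
    (hf : AlgebraicIndependent 𝕜 f) :
    LinearIndependent (MvPolynomial (Fin n) 𝕜)
      (Matrix.of fun i j => pderiv i (f j) :
        Matrix (Fin n) (Fin l) (MvPolynomial (Fin n) 𝕜)).col := by
  obtain ⟨t, hst, ht⟩ := exists_isTranscendenceBasis_superset hf.to_subtype_range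
  have hcard := ht.lift_cardinalMk_eq (IsTranscendenceBasis.mvPolynomial (Fin n) 𝕜)
  have he : Nonempty (t ≃ Fin n) := Cardinal.lift_mk_eq'.1 hcard
  obtain ⟨e⟩ := he
  let M : Matrix (Fin n) (Fin n) (MvPolynomial (Fin n) 𝕜) :=
    Matrix.of fun i k => pderiv i (e.symm k : MvPolynomial (Fin n) 𝕜)
  have hM : M.det ≠ 0 := by
    intro h0
    obtain ⟨φ, hφ0, hφ⟩ := Matrix.exists_vecMul_eq_zero_iff.2 h0
    let D : Derivation 𝕜 (MvPolynomial (Fin n) 𝕜) (MvPolynomial (Fin n) 𝕜) :=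
      ∑ i, φ i • pderiv i
    have hDx : ∀ x, D x = ∑ i, φ i * pderiv i x := fun x => by
      have h := congrFun (map_sum (Derivation.coeFnAddMonoidHom (R := 𝕜)
        (A := MvPolynomial (Fin n) 𝕜) (M := MvPolynomial (Fin n) 𝕜))
        (fun i => φ i • pderiv i) Finset.univ) x
      rw [Finset.sum_apply] at h
      exact h
    have hDt : ∀ x ∈ t, D x = 0 := by
      intro x hx
      have := congrFun hφ (e ⟨x, hx⟩)
      rw [hDx]
      simpa [Matrix.vecMul, dotProduct, M] using this
    have hDA : ∀ a ∈ Algebra.adjoin 𝕜 t, D a = 0 := by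
      intro a ha
      exact Derivation.eqOn_adjoin (D1 := D) (D2 := 0) (fun x hx => hDt x hx) ha
    have halg := ht.isAlgebraic
    rw [Subtype.range_coe] at halg
    apply hφ0
    ext1 j
    have h1 := derivation_eq_zero_of_isAlgebraic D hDA (halg.isAlgebraic (X j))
    rw [hDx] at h1
    simpa [pderiv_X, Pi.single_apply] using h1
  have hc := Matrix.linearIndependent_cols_of_det_ne_zero hM
  have := hc.comp (fun j => e ⟨f j, hst ⟨j, rfl⟩⟩) (by
    intro a c hac
    exact hf.injective (congrArg Subtype.val (e.injective hac)))
  convert! this using 1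
  ext1 j
  ext1 i
  change _ = pderiv i ((e.symm (e ⟨f j, hst ⟨j, rfl⟩⟩) : t) : MvPolynomial (Fin n) 𝕜)
  rw [Equiv.symm_apply_apply]
  rfl
end Jacobian

/-! ### Coadjoint invariants and regular elements -/

section Coad
open Matrix

variable {𝕜 : Type*} [Field 𝕜] {q : Type*} [LieRing q] [LieAlgebra 𝕜 q] {n : ℕ}

/-- `linPoly b` as a linear map. -/
def linPolyₗ (b : Basis (Fin n) 𝕜 q) : q →ₗ[𝕜] MvPolynomial (Fin n) 𝕜 where
  toFun := linPoly b
  map_add' x y := by simp [linPoly, add_smul, Finset.sum_add_distrib]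
  map_smul' c x := by simp [linPoly, mul_smul, Finset.smul_sum]

/-- The matrix of the Poisson tensor of `q*`, with entries the linear functions `⁅b i, b j⁆`. -/
def structMatrix (b : Basis (Fin n) 𝕜 q) : Matrix (Fin n) (Fin n) (MvPolynomial (Fin n) 𝕜) :=
  Matrix.of fun i j => linPoly b ⁅b i, b j⁆

/-- The differential of a polynomial, as the vector of its partial derivatives. -/
def grad (p : MvPolynomial (Fin n) 𝕜) : Fin n → MvPolynomial (Fin n) 𝕜 := fun i => pderiv i p

/-- The Jacobian matrix of `f`, whose columns are the gradients of the `f j`. -/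
def jac {l : ℕ} (f : Fin l → MvPolynomial (Fin n) 𝕜) :
    Matrix (Fin n) (Fin l) (MvPolynomial (Fin n) 𝕜) := Matrix.of fun i j => pderiv i (f j)

theorem structMatrix_transpose (b : Basis (Fin n) 𝕜 q) :
    (structMatrix b)ᵀ = -structMatrix b := by
  ext1 i j
  change linPolyₗ b ⁅b j, b i⁆ = -linPolyₗ b ⁅b i, b j⁆
  rw [← map_neg, lie_skew]

theorem isHom_linPoly (b : Basis (Fin n) 𝕜 q) (z : q) : IsHom (linPoly b z) 1 := by
  refine IsWeightedHomogeneous.sum _ _ _ fun i _ => ?_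
  rw [smul_eq_C_mul]
  exact (isWeightedHomogeneous_X 𝕜 (fun _ : Fin n => (1 : ℤ)) i).C_mul _

theorem eval_linPoly (b : Basis (Fin n) 𝕜 q) (ξ : Dual 𝕜 q) (z : q) :
    eval (fun i => ξ (b i)) (linPoly b z) = ξ z := by
  conv_rhs => rw [← b.sum_repr z]
  simp only [linPoly, map_sum, smul_eval, eval_X, map_smul, smul_eq_mul]

/-- A polynomial is invariant iff its differential is in the kernel of the Poisson tensor. -/
theorem isCoadInvariant_iff (b : Basis (Fin n) 𝕜 q) (p : MvPolynomial (Fin n) 𝕜) :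
    IsCoadInvariant b p ↔ structMatrix b *ᵥ grad p = 0 := by
  constructor
  · intro h
    ext1 i
    have := h (b i)
    simp only [coadDeriv] at this
    simp only [mulVec, dotProduct, structMatrix, grad, Matrix.of_apply, Pi.zero_apply]
    rw [← this]
    exact Finset.sum_congr rfl fun j _ => mul_comm _ _
  · intro h w
    have h1 : ∀ i, coadDeriv b (b i) p = 0 := fun i => by
      have := congrFun h i
      simp only [mulVec, dotProduct, structMatrix, grad, Matrix.of_apply, Pi.zero_apply] at this
      rw [← this, coadDeriv]
      exact Finset.sum_congr rfl fun j _ => mul_comm _ _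
    let L : q →ₗ[𝕜] MvPolynomial (Fin n) 𝕜 :=
      ∑ i, (LinearMap.mulLeft 𝕜 (pderiv i p)) ∘ₗ linPolyₗ b ∘ₗ
        { toFun := fun w => ⁅w, b i⁆
          map_add' := fun x y => add_lie x y (b i)
          map_smul' := fun t x => smul_lie t x (b i) }
    have hL : ∀ w, L w = coadDeriv b w p := fun w => by
      simp only [L, coadDeriv, LinearMap.sum_apply, LinearMap.comp_apply, LinearMap.mulLeft_apply]
      rfl
    have : L = 0 := b.ext fun i => by rw [hL, h1]; rfl
    rw [← hL, this]; rfl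

theorem isHom_pderiv {p : MvPolynomial (Fin n) 𝕜} {m : ℤ} (h : IsHom p m) (i : Fin n) :
    IsHom (pderiv i p) (m - 1) :=
  IsWeightedHomogeneous.pderiv h (sub_add_cancel m 1)

theorem isHom_det_bord {l : ℕ} (b : Basis (Fin n) 𝕜 q) (I J : Fin l → Fin n) :
    IsHom (bord (structMatrix b) I J).det ((n : ℤ) - l) := by
  have h01 : ∀ i j, IsHom ((1 : Matrix (Fin n) (Fin n) (MvPolynomial (Fin n) 𝕜)) i j) 0 := by
    intro i j
    rw [Matrix.one_apply]
    split_ifs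
    · exact isWeightedHomogeneous_one _ _
    · exact isWeightedHomogeneous_zero _ _ _
  have := isHom_det (M := bord (structMatrix b) I J) (r := Sum.elim (fun _ => 1) (fun _ => 0))
    (c := Sum.elim (fun _ => 0) (fun _ => -1)) (by
      rintro (i | i) (j | j)
      · simpa [bord, structMatrix] using isHom_linPoly b ⁅b i, b j⁆
      · simpa [bord] using h01 _ _
      · simpa [bord] using h01 _ _
      · simpa [bord] using isWeightedHomogeneous_zero _ _ _)
  simpa [← sub_eq_add_neg] using this

theorem isHom_minor {l : ℕ} {f : Fin l → MvPolynomial (Fin n) 𝕜} {d : Fin l → ℕ}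
    (hf : ∀ i, IsHom (f i) (d i)) (I : Fin l → Fin n) :
    IsHom ((jac f).submatrix I id).det (∑ i, (d i : ℤ) - l) := by
  have := isHom_det (M := (jac f).submatrix I id) (r := fun _ => 0) (c := fun j => (d j : ℤ) - 1)
    (fun i j => by simpa [jac] using isHom_pderiv (hf j) (I i))
  simpa using this

/-- In coordinates the stabiliser of `ξ` is the kernel of the Poisson tensor at `ξ`. -/
theorem finrank_coadStab (b : Basis (Fin n) 𝕜 q) (ξ : Dual 𝕜 q) :
    finrank 𝕜 (coadStab 𝕜 ξ) = finrank 𝕜 (LinearMap.ker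
      ((structMatrix b).map (eval fun i => ξ (b i))).mulVecLin) := by
  refine LinearEquiv.finrank_eq (LinearEquiv.ofSubmodules b.equivFun _ _ ?_)
  have key : ∀ x : q, x ∈ coadStab 𝕜 ξ ↔
      ((structMatrix b).map (eval fun i => ξ (b i))) *ᵥ (b.equivFun x) = 0 := by
    intro x
    have h1 : ∀ i, (((structMatrix b).map (eval fun i => ξ (b i))) *ᵥ (b.equivFun x)) i
        = ξ ⁅b i, x⁆ := by
      intro i
      conv_rhs => rw [← b.sum_equivFun x]
      simp only [mulVec, dotProduct, structMatrix, Matrix.map_apply, Matrix.of_apply, eval_linPoly,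
        lie_sum, lie_smul, map_sum, map_smul, smul_eq_mul]
      exact Finset.sum_congr rfl fun j _ => mul_comm _ _
    constructor
    · intro hx
      ext i
      rw [h1, ← lie_skew, map_neg, hx (b i)]; simp
    · intro h y
      have h2 : (ξ ∘ₗ (LieModule.toEnd 𝕜 q q x : q →ₗ[𝕜] q)) = 0 := b.ext fun i => by
        have := congrFun h i
        rw [h1, ← lie_skew, map_neg] at this
        simpa using this
      exact LinearMap.congr_fun h2 y
  ext v
  rw [Submodule.mem_map]
  constructor
  · rintro ⟨x, hx, rfl⟩
    exact (key x).1 hx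
  · intro hv
    exact ⟨b.equivFun.symm v, (key _).2 (by rw [LinearEquiv.apply_symm_apply]; exact hv),
      LinearEquiv.apply_symm_apply _ _⟩

theorem eval_det {m : Type*} [Fintype m] [DecidableEq m]
    (M : Matrix m m (MvPolynomial (Fin n) 𝕜)) (v : Fin n → 𝕜) :
    eval v M.det = (M.map (eval v)).det := RingHom.map_det _ _

theorem bord_map {l : ℕ} (P : Matrix (Fin n) (Fin n) (MvPolynomial (Fin n) 𝕜))
    (I J : Fin l → Fin n) (v : Fin n → 𝕜) :
    (bord P I J).map (eval v) = bord (P.map (eval v)) I J := by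
  ext i j
  rcases i with i | i <;> rcases j with j | j <;> simp [bord, Matrix.one_apply, apply_ite]

/-- The singular set of `q*` is the common zero set of the bordered determinants of border size
`ind q`. -/
theorem isCoadRegular_iff (b : Basis (Fin n) 𝕜 q) (ξ : Dual 𝕜 q) :
    IsCoadRegular 𝕜 ξ ↔ ∃ I J : Fin (lieIndex 𝕜 q) → Fin n,
      eval (fun i => ξ (b i)) (bord (structMatrix b) I J).det ≠ 0 := by
  simp only [eval_det, bord_map]
  rw [IsCoadRegular, finrank_coadStab b]
  constructor
  · intro h
    refine exists_det_bord_ne_zero ?_ h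
    rw [← Matrix.transpose_map, structMatrix_transpose]
    ext; simp
  · rintro ⟨I, J, h⟩
    refine le_antisymm (finrank_ker_le h) ?_
    rw [← finrank_coadStab b]
    exact ciInf_le' _ ξ

theorem linearIndependent_gradAt_iff {l : ℕ} (b : Basis (Fin n) 𝕜 q) (ξ : Dual 𝕜 q)
    (f : Fin l → MvPolynomial (Fin n) 𝕜) :
    LinearIndependent 𝕜 (fun j => gradAt b ξ (f j)) ↔
      ∃ I : Fin l → Fin n, eval (fun i => ξ (b i)) ((jac f).submatrix I id).det ≠ 0 := by
  simp only [eval_det]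
  have : (fun j => gradAt b ξ (f j)) = ((jac f).map (eval fun i => ξ (b i))).col := rfl
  rw [this]
  exact ⟨exists_minor_ne_zero, fun ⟨I, hI⟩ => linearIndependent_col_of_minor hI⟩

theorem structMatrix_mul_jac {l : ℕ} {b : Basis (Fin n) 𝕜 q} {f : Fin l → MvPolynomial (Fin n) 𝕜}
    (hf : ∀ i, IsCoadInvariant b (f i)) : structMatrix b * jac f = 0 := by
  ext1 i j
  exact congrFun ((isCoadInvariant_iff b (f j)).1 (hf j)) i

/-- The codim-2 property says that the bordered determinants have no common prime factor. -/
theorem exists_prime_not_dvd {l : ℕ} (hl : l = lieIndex 𝕜 q) {b : Basis (Fin n) 𝕜 q}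
    (hcodim2 : HasCodimTwoProperty b)
    (p : MvPolynomial (Fin n) 𝕜) (hp : Prime p) :
    ∃ IJ : (Fin l → Fin n) × (Fin l → Fin n), ¬ p ∣ (bord (structMatrix b) IJ.1 IJ.2).det := by
  subst hl
  obtain ⟨ξ, h0, hξ⟩ := hcodim2 p hp
  obtain ⟨I, J, h⟩ := (isCoadRegular_iff b ξ).1 hξ
  refine ⟨(I, J), fun ⟨r, hr⟩ => h ?_⟩
  change (bord (structMatrix b) I J).det = _ at hr
  rw [hr, map_mul]
  change evalDual b ξ p * _ = 0
  rw [h0, zero_mul]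

/-- The products of two maximal minors of the Jacobian matrix are the bordered determinants of the
Poisson tensor, up to one nonzero scalar. They are multiples of the latter by a common polynomial
because of the codim-2 property, and the degree hypothesis forces this polynomial to be constant. -/
theorem exists_minor_eq [CharZero 𝕜] {b : Basis (Fin n) 𝕜 q} (hcodim2 : HasCodimTwoProperty b)
    {f : Fin (lieIndex 𝕜 q) → MvPolynomial (Fin n) 𝕜} {d : Fin (lieIndex 𝕜 q) → ℕ}
    (hinv : ∀ i, IsCoadInvariant b (f i)) (hhom : ∀ i, IsHom (f i) (d i))
    (hai : AlgebraicIndependent 𝕜 f) (hdeg : 2 * ∑ i, d i = n + lieIndex 𝕜 q) :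
    ∃ c : 𝕜, c ≠ 0 ∧ ∀ I J, ((jac f).submatrix I id).det * ((jac f).submatrix J id).det
      = C c * (bord (structMatrix b) I J).det := by
  obtain ⟨I₀, hI₀⟩ := exists_minor_ne_zero_of_domain (linearIndependent_jacobian hai)
  change ((jac f).submatrix I₀ id).det ≠ 0 at hI₀
  have hreg : ∃ ξ : Dual 𝕜 q, IsCoadRegular 𝕜 ξ :=
    Nat.sInf_mem (Set.range_nonempty fun ξ : Dual 𝕜 q => finrank 𝕜 (coadStab 𝕜 ξ))
  have hne : ∃ IJ : (Fin (lieIndex 𝕜 q) → Fin n) × (Fin (lieIndex 𝕜 q) → Fin n),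
      (bord (structMatrix b) IJ.1 IJ.2).det ≠ 0 := by
    obtain ⟨ξ, hξ⟩ := hreg
    obtain ⟨I, J, h⟩ := (isCoadRegular_iff b ξ).1 hξ
    refine ⟨(I, J), fun h0 => h ?_⟩
    change (bord (structMatrix b) I J).det = _ at h0
    rw [h0, map_zero]
  obtain ⟨p, hp⟩ := exists_eq_mul_of_proportional
    (u := fun IJ : (Fin (lieIndex 𝕜 q) → Fin n) × (Fin (lieIndex 𝕜 q) → Fin n) =>
      (bord (structMatrix b) IJ.1 IJ.2).det)
    (v := fun IJ => ((jac f).submatrix IJ.1 id).det * ((jac f).submatrix IJ.2 id).det)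
    (fun i j => det_bord_proportional (structMatrix_transpose b) (structMatrix_mul_jac hinv) _ _ _ _)
    hne (exists_prime_not_dvd rfl hcodim2)
  have hv : IsHom (((jac f).submatrix I₀ id).det * ((jac f).submatrix I₀ id).det)
      ((n : ℤ) - lieIndex 𝕜 q) := by
    have h1 := (isHom_minor hhom I₀).mul (isHom_minor hhom I₀)
    convert h1 using 1
    have : (2 : ℤ) * ∑ i, (d i : ℤ) = n + lieIndex 𝕜 q := by exact_mod_cast hdeg
    linarith
  obtain ⟨c, hc, rfl⟩ := eq_C_of_mul_eq (isHom_det_bord b I₀ I₀) hv (mul_ne_zero hI₀ hI₀)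
    (hp (I₀, I₀))
  exact ⟨c, hc, fun I J => hp (I, J)⟩

/-- Every polynomial vector in the kernel of `P` is a polynomial combination of the columns of `F`. The
coefficients are ratios of minors by Cramer's rule; they are polynomials because the maximal minors
of `F` have no common prime factor. -/
theorem exists_grad_eq {l : ℕ} {P : Matrix (Fin n) (Fin n) (MvPolynomial (Fin n) 𝕜)}
    {F : Matrix (Fin n) (Fin l) (MvPolynomial (Fin n) 𝕜)} (hF : P * F = 0) {c : 𝕜} (hc : c ≠ 0)
    (hmin : ∀ I J, (F.submatrix I id).det * (F.submatrix J id).det = C c * (bord P I J).det)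
    {I₀ : Fin l → Fin n} (hI₀ : (F.submatrix I₀ id).det ≠ 0)
    (hprime : ∀ p, Prime p → ∃ J : Fin l → Fin n, ¬ p ∣ (F.submatrix J id).det)
    {y : Fin n → MvPolynomial (Fin n) 𝕜} (hy : P *ᵥ y = 0) : ∃ a, y = F *ᵥ a := by
  have hC : (C c : MvPolynomial (Fin n) 𝕜) ≠ 0 := by simpa using hc
  have h1 : ∀ i, ∃ a, ∀ J, ((F.updateCol i y).submatrix J id).det = a * (F.submatrix J id).det := by
    intro i
    refine exists_eq_mul_of_proportional (fun J J' => ?_) ⟨I₀, hI₀⟩ hprime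
    have hF' : P * F.updateCol i y = 0 := by
      rw [Matrix.mul_updateCol, hF, hy]
      ext a j; simp [Matrix.updateCol_apply]
    have h2 := det_bord_mul_minor hF' I₀ J J'
    have e1 := hmin I₀ J
    have e2 := hmin I₀ J'
    apply mul_left_cancel₀ hI₀
    linear_combination ((F.updateCol i y).submatrix J' id).det * e1
      - ((F.updateCol i y).submatrix J id).det * e2 - C c * h2
  choose a ha using h1
  refine ⟨a, ?_⟩
  have hdet : (bord P I₀ I₀).det ≠ 0 := by
    intro h0
    have := hmin I₀ I₀
    rw [h0, mul_zero] at this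
    exact mul_ne_zero hI₀ hI₀ this
  rw [← sub_eq_zero]
  refine eq_zero_of_det_bord_ne_zero hdet ?_ ?_
  · rw [mulVec_sub, hy, mulVec_mulVec, hF, zero_mulVec, sub_zero]
  · have hcr : (F.submatrix I₀ id).cramer (y ∘ I₀) = (F.submatrix I₀ id).det • a := by
      ext1 i
      rw [cramer_apply, Pi.smul_apply, smul_eq_mul, mul_comm, ← ha]
      congr 1
    have h3 := mulVec_cramer (F.submatrix I₀ id) (y ∘ I₀)
    rw [hcr, mulVec_smul] at h3
    intro s
    have h4 := congrFun h3 s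
    simp only [Pi.smul_apply, smul_eq_mul] at h4
    have h5 := mul_left_cancel₀ hI₀ h4
    rw [Pi.sub_apply, sub_eq_zero]
    exact h5.symm

theorem pderiv_comm (i j : Fin n) (p : MvPolynomial (Fin n) 𝕜) :
    pderiv i (pderiv j p) = pderiv j (pderiv i p) := by
  have h : ⁅(pderiv i : Derivation 𝕜 (MvPolynomial (Fin n) 𝕜) (MvPolynomial (Fin n) 𝕜)),
      (pderiv j : Derivation 𝕜 (MvPolynomial (Fin n) 𝕜) (MvPolynomial (Fin n) 𝕜))⁆ = 0 := by
    refine MvPolynomial.derivation_ext fun k => ?_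
    simp only [Derivation.commutator_apply, pderiv_X, Pi.single_apply, Derivation.coe_zero,
      Pi.zero_apply]
    split_ifs <;> simp
  have := DFunLike.congr_fun h p
  rw [Derivation.commutator_apply] at this
  exact sub_eq_zero.1 this

/-- If `dh = ∑ aᵢ dfᵢ` with `h` a polynomial and the `fᵢ` invariant with generically independent
differentials, then the `aᵢ` are invariant. Equality of mixed second derivatives of `h` reads
`(∇a) Fᵀ = F (∇a)ᵀ`; multiplying by `P` gives `P (∇a) Fᵀ = 0`, and `Fᵀ` can be cancelled. -/
theorem isCoadInvariant_coeff {l : ℕ} {b : Basis (Fin n) 𝕜 q}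
    {f : Fin l → MvPolynomial (Fin n) 𝕜} (hinv : ∀ i, IsCoadInvariant b (f i))
    {I₀ : Fin l → Fin n} (hI₀ : ((jac f).submatrix I₀ id).det ≠ 0)
    {h : MvPolynomial (Fin n) 𝕜} {a : Fin l → MvPolynomial (Fin n) 𝕜}
    (hh : grad h = jac f *ᵥ a) (i : Fin l) : IsCoadInvariant b (a i) := by
  have hsymm : jac a * (jac f)ᵀ = jac f * (jac a)ᵀ := by
    ext1 k j
    have e : ∀ k j, pderiv k (pderiv j h) =
        ∑ i, pderiv k (pderiv j (f i)) * a i + ∑ i, pderiv j (f i) * pderiv k (a i) := by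
      intro k j
      have : pderiv j h = ∑ i, pderiv j (f i) * a i := congrFun hh j
      rw [this, map_sum, ← Finset.sum_add_distrib]
      refine Finset.sum_congr rfl fun i _ => ?_
      rw [Derivation.leibniz, smul_eq_mul, smul_eq_mul]; ring
    have comm : ∀ p : MvPolynomial (Fin n) 𝕜, pderiv k (pderiv j p) = pderiv j (pderiv k p) :=
      fun p => pderiv_comm k j p
    have h1 := e k j
    rw [comm h, e j k] at h1
    simp only [comm] at h1
    have h2 := add_left_cancel h1
    simp only [Matrix.mul_apply, Matrix.transpose_apply, jac, Matrix.of_apply]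
    rw [h2]
    exact Finset.sum_congr rfl fun i _ => mul_comm _ _
  have hz : structMatrix b * jac a * ((jac f).submatrix I₀ id)ᵀ = 0 := by
    have h1 : structMatrix b * jac a * (jac f)ᵀ = 0 := by
      rw [Matrix.mul_assoc, hsymm, ← Matrix.mul_assoc, structMatrix_mul_jac hinv, Matrix.zero_mul]
    ext1 k j
    exact congrFun (congrFun h1 k) (I₀ j)
  rw [isCoadInvariant_iff]
  ext1 k
  have h2 : (structMatrix b * jac a).row k = 0 := by
    refine eq_zero_of_vecMul_eq_zero (M := ((jac f).submatrix I₀ id)ᵀ) (by rwa [det_transpose]) ?_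
    ext1 j
    exact congrFun (congrFun hz k) j
  exact congrFun h2 i

/-- The homogeneous components of an invariant are invariant. -/
theorem IsCoadInvariant.component {b : Basis (Fin n) 𝕜 q} {p : MvPolynomial (Fin n) 𝕜}
    (h : IsCoadInvariant b p) (m : ℤ) : IsCoadInvariant b
      (weightedHomogeneousComponent (fun _ : Fin n => (1 : ℤ)) m p) := by
  intro w
  let L : MvPolynomial (Fin n) 𝕜 →ₗ[𝕜] MvPolynomial (Fin n) 𝕜 :=
    ∑ i, LinearMap.mulRight 𝕜 (linPoly b ⁅w, b i⁆) ∘ₗ (pderiv i).toLinearMap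
  have hL : ∀ p, L p = coadDeriv b w p := fun p => by simp [L, coadDeriv]
  have := component_map L 0 (fun p m hp => by
    rw [hL, add_zero]
    refine IsWeightedHomogeneous.sum _ _ _ fun i _ => ?_
    simpa using (isHom_pderiv hp i).mul (isHom_linPoly b ⁅w, b i⁆)) p m
  rw [hL, hL, h w, map_zero] at this
  exact this.symm

/-- If `dh = ∑ aᵢ dfᵢ` with `h` homogeneous of degree `e`, then each `aᵢ` may be replaced by its
component of degree `e - d i`. -/
theorem exists_homogeneous_coeff {l : ℕ} {f : Fin l → MvPolynomial (Fin n) 𝕜} {d : Fin l → ℕ}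
    (hf : ∀ i, IsHom (f i) (d i)) {h : MvPolynomial (Fin n) 𝕜} {e : ℤ} (he : IsHom h e)
    {a : Fin l → MvPolynomial (Fin n) 𝕜} (hh : grad h = jac f *ᵥ a) :
    ∃ a', (∀ i, IsHom (a' i) (e - d i)) ∧ grad h = jac f *ᵥ a' := by
  refine ⟨fun i => weightedHomogeneousComponent (fun _ : Fin n => (1 : ℤ)) (e - d i) (a i),
    fun i => weightedHomogeneousComponent_isWeightedHomogeneous _ _, ?_⟩
  ext1 j
  have h1 : pderiv j h = ∑ i, pderiv j (f i) * a i := congrFun hh j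
  have h2 := (isHom_pderiv he j).weightedHomogeneousComponent_same
  change pderiv j h = ∑ i, pderiv j (f i) * _
  rw [← h2, h1, map_sum]
  refine Finset.sum_congr rfl fun i _ => ?_
  have := component_map (LinearMap.mulLeft 𝕜 (pderiv j (f i))) (d i - 1) (fun p m hp => by
    rw [add_comm]
    exact (isHom_pderiv (hf i) j).mul hp) (a i) (e - d i)
  rw [show e - d i + (d i - 1) = e - 1 by ring] at this
  exact this

/-- A homogeneous invariant `h` of degree `e` is a polynomial in the `fᵢ`, by induction on `e`: Euler's
identity turns `dh = ∑ aᵢ dfᵢ` into `e h = ∑ dᵢ aᵢ fᵢ` with invariant `aᵢ` of smaller degree. -/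
theorem mem_adjoin_of_isHom [CharZero 𝕜] {l : ℕ} {b : Basis (Fin n) 𝕜 q}
    {f : Fin l → MvPolynomial (Fin n) 𝕜} {d : Fin l → ℕ} (hinv : ∀ i, IsCoadInvariant b (f i))
    (hf : ∀ i, IsHom (f i) (d i))
    {I₀ : Fin l → Fin n} (hI₀ : ((jac f).submatrix I₀ id).det ≠ 0)
    (hex : ∀ h, IsCoadInvariant b h → ∃ a, grad h = jac f *ᵥ a) (e : ℕ) :
    ∀ h, IsHom h (e : ℤ) → IsCoadInvariant b h → h ∈ Algebra.adjoin 𝕜 (Set.range f) := by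
  induction e using Nat.strong_induction_on with
  | _ e ih =>
  intro h he hh
  rcases Nat.eq_zero_or_pos e with rfl | hpos
  · have h0 := (isHom_iff.1 he).totalDegree_le
    rw [totalDegree_eq_zero_iff_eq_C.1 (Nat.le_zero.1 h0)]
    exact Subalgebra.algebraMap_mem _ _
  obtain ⟨a₀, ha₀⟩ := hex h hh
  obtain ⟨a, ha, hg⟩ := exists_homogeneous_coeff hf he ha₀
  have hainv := isCoadInvariant_coeff hinv hI₀ hg
  have heuler : e • h = ∑ i, a i * (d i • f i) := by
    rw [← (isHom_iff.1 he).sum_X_mul_pderiv]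
    simp_rw [← fun i => (isHom_iff.1 (hf i)).sum_X_mul_pderiv, Finset.mul_sum]
    rw [Finset.sum_comm]
    refine Finset.sum_congr rfl fun j _ => ?_
    have : pderiv j h = ∑ i, pderiv j (f i) * a i := congrFun hg j
    rw [this, Finset.mul_sum]
    exact Finset.sum_congr rfl fun i _ => by ring
  have hmem : e • h ∈ Algebra.adjoin 𝕜 (Set.range f) := by
    rw [heuler]
    refine Subalgebra.sum_mem _ fun i _ => ?_
    rcases Nat.eq_zero_or_pos (d i) with hd | hd
    · rw [hd, zero_smul, mul_zero]; exact Subalgebra.zero_mem _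
    refine Subalgebra.mul_mem _ ?_
      (nsmul_mem (Algebra.subset_adjoin (Set.mem_range_self i)) _)
    rcases lt_or_ge e (d i) with hlt | hle
    · rw [IsHom.eq_zero_of_neg (ha i) (by omega)]; exact Subalgebra.zero_mem _
    · refine ih (e - d i) (by omega) _ ?_ (hainv i)
      rw [Nat.cast_sub hle]; exact ha i
  have he0 : (e : 𝕜) ≠ 0 := Nat.cast_ne_zero.2 hpos.ne'
  have : h = (e : 𝕜)⁻¹ • (e • h) := by
    rw [← Nat.cast_smul_eq_nsmul 𝕜, inv_smul_smul₀ he0]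
  rw [this]
  exact Subalgebra.smul_mem _ hmem _

theorem mem_of_component_mem (A : Subalgebra 𝕜 (MvPolynomial (Fin n) 𝕜))
    (p : MvPolynomial (Fin n) 𝕜)
    (h : ∀ e : ℕ, weightedHomogeneousComponent (fun _ : Fin n => (1 : ℤ)) (e : ℤ) p ∈ A) :
    p ∈ A := by
  rw [← sum_homogeneousComponent p]
  refine Subalgebra.sum_mem _ fun e _ => ?_
  convert h e using 1
  ext s
  rw [coeff_homogeneousComponent, coeff_weightedHomogeneousComponent, weight_one_int]
  simp
end Coad

end CoadFree

/-! ### Free generation -/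

theorem free_generation_of_degree_sum_eq (b : Basis (Fin n) 𝕜 q)
    (hcodim2 : HasCodimTwoProperty b)
    -- trdeg 𝕜[q*]^Q = ind q :
    (htrdeg₁ : ∃ g : Fin (lieIndex 𝕜 q) → MvPolynomial (Fin n) 𝕜,
      (∀ i, IsCoadInvariant b (g i)) ∧ AlgebraicIndependent 𝕜 g)
    (htrdeg₂ : ∀ g : Fin (lieIndex 𝕜 q + 1) → MvPolynomial (Fin n) 𝕜,
      (∀ i, IsCoadInvariant b (g i)) → ¬ AlgebraicIndependent 𝕜 g)
    -- the polynomials f₁,…,f_l :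
    (f : Fin (lieIndex 𝕜 q) → MvPolynomial (Fin n) 𝕜) (d : Fin (lieIndex 𝕜 q) → ℕ)
    (hinv : ∀ i, IsCoadInvariant b (f i))
    (hhom : ∀ i, (f i).IsHomogeneous (d i))
    (hai : AlgebraicIndependent 𝕜 f)
    -- Σ deg fᵢ = (dim q + ind q)/2 :
    (hdeg : 2 * ∑ i, d i = finrank 𝕜 q + lieIndex 𝕜 q) :
    (∀ p : MvPolynomial (Fin n) 𝕜, IsCoadInvariant b p →
        p ∈ Algebra.adjoin 𝕜 (Set.range f)) ∧
    (∀ ξ : Dual 𝕜 q, IsCoadRegular 𝕜 ξ ↔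
        LinearIndependent 𝕜 fun j => gradAt b ξ (f j)) := by
  have hhom' : ∀ i, CoadFree.IsHom (f i) (d i) := fun i => CoadFree.isHom_iff.2 (hhom i)
  rw [finrank_eq_card_basis b, Fintype.card_fin] at hdeg
  obtain ⟨c, hc, hmin⟩ := CoadFree.exists_minor_eq hcodim2 hinv hhom' hai hdeg
  obtain ⟨I₀, hI₀⟩ :=
    CoadFree.exists_minor_ne_zero_of_domain (CoadFree.linearIndependent_jacobian hai)
  have hCu : IsUnit (C c : MvPolynomial (Fin n) 𝕜) := (isUnit_iff_ne_zero.2 hc).map C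
  refine ⟨fun p hp => ?_, fun ξ => ?_⟩
  · refine CoadFree.mem_of_component_mem _ p fun e => ?_
    refine CoadFree.mem_adjoin_of_isHom hinv hhom' hI₀ (fun h hh => ?_) e _
      (weightedHomogeneousComponent_isWeightedHomogeneous _ _)
      (CoadFree.IsCoadInvariant.component hp _)
    refine CoadFree.exists_grad_eq (CoadFree.structMatrix_mul_jac hinv) hc hmin hI₀ (fun π hπ => ?_)
      ((CoadFree.isCoadInvariant_iff b h).1 hh)
    -- A prime dividing all maximal minors of the Jacobian would divide all bordered determinants.
    obtain ⟨⟨I, J⟩, hIJ⟩ := CoadFree.exists_prime_not_dvd rfl hcodim2 π hπ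
    refine ⟨I, fun hd => hIJ ?_⟩
    have := hd.mul_right ((CoadFree.jac f).submatrix J id).det
    rw [hmin] at this
    exact hCu.dvd_mul_left.1 this
  · rw [CoadFree.isCoadRegular_iff b, CoadFree.linearIndependent_gradAt_iff]
    have hev : ∀ I J, eval (fun i => ξ (b i)) ((CoadFree.jac f).submatrix I id).det *
        eval (fun i => ξ (b i)) ((CoadFree.jac f).submatrix J id).det
        = c * eval (fun i => ξ (b i)) (CoadFree.bord (CoadFree.structMatrix b) I J).det := by
      intro I J
      rw [← map_mul, hmin, map_mul, eval_C]
    constructor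
    · rintro ⟨I, J, h⟩
      refine ⟨I, fun h0 => mul_ne_zero hc h ?_⟩
      rw [← hev, h0, zero_mul]
    · rintro ⟨I, h⟩
      refine ⟨I, I, fun h0 => mul_ne_zero h h ?_⟩
      rw [hev, h0, mul_zero]

end
end
end

section
/- Let k = q ⋉ V be an arbitrary semi-direct product and K = Q ⋉ V. Let J₁ ⊂ 𝕜[k]^K be the ideal spanned by all bi-homogeneous invariants having positive degree with respect to V, and let J₂ ⊂ 𝕜[k*]^K be the ideal spanned by all bi-homogeneous invariants having positive degree with respect to q*. Then 𝕜[k]^K = i_q(𝕜[q]^Q) ⊕ J₁ and 𝕜[k*]^K = i_{V*}(𝕜[V*]^Q) ⊕ J₂, where i_q : 𝕜[q]^Q ↪ 𝕜[k]^K and i_{V*} : 𝕜[V*]^Q ↪ 𝕜[k*]^K are the natural inclusions induced by the K-equivariant projections q ⋉ V → q and (q ⋉ V)* → V*. -/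
/-!
The bigrading of a polynomial algebra on `k` or `k*` is respected by invariance: the derivation
attached to `(x, 0)` preserves the bidegree, while the one attached to `(0, v)` shifts it by
`(1, -1)` (on `𝕜[k]`) or by `(-1, 1)` (on `𝕜[k*]`). Hence all bihomogeneous components of an
invariant are invariants (`linDeriv_component`, `IsAdInvK.component`, `IsCoadInvK.component`).

Consider on `𝕜[k]` the restriction map `restrictInl` to `q`, which kills the coordinates of `V`.
It is a retraction of the inclusion `i_q`, it sends `K`-invariants to `Q`-invariants, it kills
every bihomogeneous element of positive `V`-degree (hence `J₁`), and `i_q` after it fixes every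
element of `V`-degree zero. Thus for an invariant `p` the difference `p - i_q (p|_q)` is the sum of
the components of `p` of positive `V`-degree, which lie in `J₁`; and applying the restriction to
`p = i_q p₀ + j` forces `p₀ = p|_q`. The argument for `𝕜[k*]` is the same, with the restriction
`restrictInr` to `V*`.
-/


/-!
STATEMENT 3: Let k = q ⋉ V and K = Q ⋉ V.  Let J₁ ⊂ 𝕜[k]^K be the ideal of the
invariant algebra spanned by all bi-homogeneous invariants of positive degree with
respect to V, and J₂ ⊂ 𝕜[k*]^K the ideal spanned by all bi-homogeneous invariants of
positive degree with respect to q*.  Then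
  𝕜[k]^K = i_q(𝕜[q]^Q) ⊕ J₁  and  𝕜[k*]^K = i_{V*}(𝕜[V*]^Q) ⊕ J₂.

Conventions as in Statement 2 (connected groups, infinitesimal invariance, coordinates,
renaming maps as the inclusions i_q, i_{V*}).  The ideal J₁ of the invariant algebra is
realised as the 𝕜-span of the products s·t with s a K-invariant and t a bi-homogeneous
K-invariant of positive V-degree (similarly J₂); the direct sum decompositions are
expressed as: every invariant has a unique decomposition p = i(p₀) + j with p₀ an
invariant of the small algebra and j in the ideal.
-/

open MvPolynomial Module

noncomputable section

open MvPolynomial Module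

noncomputable section

variable {𝕜 : Type*} [Field 𝕜] [IsAlgClosed 𝕜] [CharZero 𝕜]
variable {q : Type*} [LieRing q] [LieAlgebra 𝕜 q]
variable {V : Type*} [AddCommGroup V] [Module 𝕜 V]
variable [LieRingModule q V] [LieModule 𝕜 q V]
variable {n m : ℕ}

/-- The bracket of the semi-direct product k = q ⋉ V :
`[(x,v),(x',v')] = ([x,x'], x·v' − x'·v)`. -/
def brkSD (w z : q × V) : q × V := (⁅w.1, z.1⁆, ⁅w.1, z.2⁆ - ⁅z.1, w.2⁆)

/-- The linear polynomial function on k* corresponding to `z ∈ k = q × V`. -/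
def linPolyK (bq : Basis (Fin n) 𝕜 q) (bV : Basis (Fin m) 𝕜 V) (z : q × V) :
    MvPolynomial (Fin n ⊕ Fin m) 𝕜 :=
  ∑ i, (bq.prod bV).repr z i • X i

/-- Infinitesimal coadjoint action of `w ∈ k` on 𝕜[k*]. -/
def coadDerivK (bq : Basis (Fin n) 𝕜 q) (bV : Basis (Fin m) 𝕜 V) (w : q × V)
    (p : MvPolynomial (Fin n ⊕ Fin m) 𝕜) : MvPolynomial (Fin n ⊕ Fin m) 𝕜 :=
  ∑ i, pderiv i p * linPolyK bq bV (brkSD w (bq.prod bV i))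

/-- Invariance under the coadjoint representation of the connected group K = Q ⋉ V. -/
def IsCoadInvK (bq : Basis (Fin n) 𝕜 q) (bV : Basis (Fin m) 𝕜 V)
    (p : MvPolynomial (Fin n ⊕ Fin m) 𝕜) : Prop :=
  ∀ w : q × V, coadDerivK bq bV w p = 0

/-- Infinitesimal adjoint action of `w ∈ k` on 𝕜[k] (coordinates = dual basis). -/
def adDerivK (bq : Basis (Fin n) 𝕜 q) (bV : Basis (Fin m) 𝕜 V) (w : q × V)
    (p : MvPolynomial (Fin n ⊕ Fin m) 𝕜) : MvPolynomial (Fin n ⊕ Fin m) 𝕜 :=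
  ∑ i, pderiv i p *
    (∑ j, (bq.prod bV).repr (brkSD w (bq.prod bV j)) i • X j)

/-- Invariance under the adjoint representation of the connected group K = Q ⋉ V. -/
def IsAdInvK (bq : Basis (Fin n) 𝕜 q) (bV : Basis (Fin m) 𝕜 V)
    (p : MvPolynomial (Fin n ⊕ Fin m) 𝕜) : Prop :=
  ∀ w : q × V, adDerivK bq bV w p = 0

/-- Infinitesimal adjoint action of Q on 𝕜[q]. -/
def adDerivQ (bq : Basis (Fin n) 𝕜 q) (x : q) (p : MvPolynomial (Fin n) 𝕜) :
    MvPolynomial (Fin n) 𝕜 :=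
  ∑ i, pderiv i p * (∑ j, bq.repr ⁅x, bq j⁆ i • X j)

/-- Invariance for the adjoint representation of the connected group Q on q. -/
def IsAdInvQ (bq : Basis (Fin n) 𝕜 q) (p : MvPolynomial (Fin n) 𝕜) : Prop :=
  ∀ x : q, adDerivQ bq x p = 0

/-- Infinitesimal action of Q on 𝕜[V*] (variables = basis vectors of V). -/
def derivVdual (bV : Basis (Fin m) 𝕜 V) (x : q) (p : MvPolynomial (Fin m) 𝕜) :
    MvPolynomial (Fin m) 𝕜 :=
  ∑ j, pderiv j p * (∑ j', bV.repr ⁅x, bV j⁆ j' • X j')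

/-- Invariance for the action of the connected group Q on V*. -/
def IsInvVdual (bV : Basis (Fin m) 𝕜 V) (p : MvPolynomial (Fin m) 𝕜) : Prop :=
  ∀ x : q, derivVdual bV x p = 0

/-- The bigrading weight: (degree in q, degree in V). -/
def bigrad (n m : ℕ) : Fin n ⊕ Fin m → ℕ × ℕ :=
  Sum.elim (fun _ => ((1 : ℕ), (0 : ℕ))) (fun _ => ((0 : ℕ), (1 : ℕ)))


/-- The ideal J₁ of 𝕜[k]^K spanned by the bi-homogeneous invariants of positive
V-degree, as a 𝕜-submodule of 𝕜[k]. -/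
def J₁ (bq : Basis (Fin n) 𝕜 q) (bV : Basis (Fin m) 𝕜 V) :
    Submodule 𝕜 (MvPolynomial (Fin n ⊕ Fin m) 𝕜) :=
  Submodule.span 𝕜 {x | ∃ s t, IsAdInvK bq bV s ∧ IsAdInvK bq bV t ∧
    (∃ d : ℕ × ℕ, 0 < d.2 ∧ IsWeightedHomogeneous (bigrad n m) t d) ∧ x = s * t}

/-- The ideal J₂ of 𝕜[k*]^K spanned by the bi-homogeneous invariants of positive
q*-degree, as a 𝕜-submodule of 𝕜[k*]. -/
def J₂ (bq : Basis (Fin n) 𝕜 q) (bV : Basis (Fin m) 𝕜 V) :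
    Submodule 𝕜 (MvPolynomial (Fin n ⊕ Fin m) 𝕜) :=
  Submodule.span 𝕜 {x | ∃ s t, IsCoadInvK bq bV s ∧ IsCoadInvK bq bV t ∧
    (∃ d : ℕ × ℕ, 0 < d.1 ∧ IsWeightedHomogeneous (bigrad n m) t d) ∧ x = s * t}

set_option linter.unusedSectionVars false

/-! ### Linear vector fields and bihomogeneous components -/

/-- The derivation `X i ↦ ∑ j, c i j • X j` of the polynomial algebra (a linear vector field),
as a linear map. -/
def linDeriv {R σ : Type*} [CommRing R] [Fintype σ] (c : σ → σ → R) :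
    MvPolynomial σ R →ₗ[R] MvPolynomial σ R where
  toFun p := ∑ i, pderiv i p * ∑ j, c i j • X j
  map_add' p r := by simp only [map_add, add_mul, Finset.sum_add_distrib]
  map_smul' a p := by
    simp only [Derivation.map_smul, smul_mul_assoc, Finset.smul_sum, RingHom.id_apply]

lemma linDeriv_apply {R σ : Type*} [CommRing R] [Fintype σ] (c : σ → σ → R)
    (p : MvPolynomial σ R) :
    linDeriv c p = ∑ i, pderiv i p * ∑ j, c i j • X j := rfl

lemma linDeriv_add {R σ : Type*} [CommRing R] [Fintype σ] (c c' : σ → σ → R)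
    (p : MvPolynomial σ R) :
    linDeriv (fun i j => c i j + c' i j) p = linDeriv c p + linDeriv c' p := by
  simp only [linDeriv_apply, add_smul, Finset.sum_add_distrib, mul_add]

/-- A linear vector field of weight `b - a` sends polynomials of degree `d` to polynomials of
degree `d + b - a`; the shift is written additively since degrees lie in a monoid. -/
lemma linDeriv_weight {R σ M : Type*} [CommRing R] [Fintype σ] [AddCommMonoid M]
    (w : σ → M) (a b : M) (c : σ → σ → R) (hc : ∀ i j, c i j ≠ 0 → w j + a = w i + b)
    {t : MvPolynomial σ R} {d : M} (ht : IsWeightedHomogeneous w t d) {s : σ →₀ ℕ}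
    (hs : coeff s (linDeriv c t) ≠ 0) : Finsupp.weight w s + a = d + b := by
  classical
  rw [linDeriv_apply, coeff_sum] at hs
  obtain ⟨i, -, hi⟩ := Finset.exists_ne_zero_of_sum_ne_zero hs
  rw [Finset.mul_sum, coeff_sum] at hi
  obtain ⟨j, -, hj⟩ := Finset.exists_ne_zero_of_sum_ne_zero hi
  rw [mul_smul_comm, coeff_smul, coeff_mul_X', smul_eq_mul] at hj
  have hcij := hc i j (left_ne_zero_of_mul hj)
  have h2 := right_ne_zero_of_mul hj
  split_ifs at h2 with hjs
  · rw [coeff_pderiv] at h2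
    have h3 := ht (left_ne_zero_of_mul h2)
    have h4 : Finsupp.weight w s = Finsupp.weight w (s - Finsupp.single j 1) + w j := by
      have : s = (s - Finsupp.single j 1) + Finsupp.single j 1 :=
        (Finsupp.sub_add_single_one_cancel (Finsupp.mem_support_iff.mp hjs)).symm
      conv_lhs => rw [this]
      rw [map_add, Finsupp.weight_single, one_smul]
    rw [map_add, Finsupp.weight_single, one_smul] at h3
    rw [h4, ← h3, add_assoc, hcij, add_assoc]
  · exact absurd rfl h2

/-- The weighted components of a polynomial annihilated by a homogeneous linear vector field are
annihilated as well: their images have pairwise distinct degrees, so they cannot cancel. -/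
lemma linDeriv_component {R σ M : Type*} [CommRing R] [Fintype σ] [AddCancelCommMonoid M]
    (w : σ → M) (a b : M) (c : σ → σ → R) (hc : ∀ i j, c i j ≠ 0 → w j + a = w i + b)
    {p : MvPolynomial σ R} (hp : linDeriv c p = 0) (d : M) :
    linDeriv c (weightedHomogeneousComponent w d p) = 0 := by
  classical
  by_contra hne
  obtain ⟨s, hs⟩ := MvPolynomial.ne_zero_iff.mp hne
  have hsd := linDeriv_weight w a b c hc
    (weightedHomogeneousComponent_isWeightedHomogeneous d p) hs
  apply hs
  have hsum : p = ∑ e ∈ (weightedHomogeneousComponent_finsupp (w := w) p).toFinset,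
      weightedHomogeneousComponent w e p := by
    conv_lhs => rw [← finsum_weightedHomogeneousComponent w p]
    exact finsum_eq_sum _ _
  have h0 : coeff s (linDeriv c p) = 0 := by rw [hp, coeff_zero]
  rw [hsum, map_sum, coeff_sum] at h0
  by_cases hd : d ∈ (weightedHomogeneousComponent_finsupp (w := w) p).toFinset
  · rwa [Finset.sum_eq_single_of_mem d hd] at h0
    intro e _ hed
    by_contra hse
    have := linDeriv_weight w a b c hc
      (weightedHomogeneousComponent_isWeightedHomogeneous e p) hse
    exact hed (add_right_cancel (this.symm.trans hsd))
  · have : weightedHomogeneousComponent w d p = 0 := by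
      by_contra h
      exact hd ((Set.Finite.mem_toFinset _).mpr h)
    rw [this, map_zero, coeff_zero]

/-! ### Killing variables -/

lemma aeval_eq_self_of_support {R σ : Type*} [CommRing R] (χ : σ → MvPolynomial σ R)
    (t : MvPolynomial σ R)
    (h : ∀ s, coeff s t ≠ 0 → ∀ i, s i ≠ 0 → χ i = X i) : aeval χ t = t := by
  conv_rhs => rw [← aeval_X_left_apply t]
  refine eval₂Hom_congr' rfl (fun i hi _ => ?_) rfl
  obtain ⟨s, hs, his⟩ := (mem_vars_iff_mem_support i).mp hi
  exact h s (mem_support_iff.mp hs) i (Finsupp.mem_support_iff.mp his)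

lemma aeval_eq_zero_of_support {R σ A : Type*} [CommRing R] [CommRing A] [Algebra R A]
    (χ : σ → A) (t : MvPolynomial σ R)
    (h : ∀ s, coeff s t ≠ 0 → ∃ i, s i ≠ 0 ∧ χ i = 0) : aeval χ t = 0 := by
  rw [t.as_sum, map_sum]
  refine Finset.sum_eq_zero fun s hs => ?_
  obtain ⟨i, his, hi⟩ := h s (mem_support_iff.mp hs)
  rw [aeval_monomial, Finsupp.prod,
    Finset.prod_eq_zero (Finsupp.mem_support_iff.mpr his) (by rw [hi, zero_pow his]), mul_zero]

/-- Restriction to a coordinate subspace commutes with the partial derivatives along it. -/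
lemma pderiv_aeval_of_pderiv {R σ τ : Type*} [CommRing R]
    (χ : σ → MvPolynomial τ R) (i : τ) (k : σ)
    (h : pderiv i (χ k) = 1) (h' : ∀ l, l ≠ k → pderiv i (χ l) = 0) (p : MvPolynomial σ R) :
    pderiv i (aeval χ p) = aeval χ (pderiv k p) := by
  classical
  induction p using MvPolynomial.induction_on with
  | C a => simp [algebraMap_eq]
  | add p r hp hr => simp only [map_add, hp, hr]
  | mul_X p l hp =>
    by_cases hl : l = k
    · subst hl
      simp only [map_mul, pderiv_mul, map_add, aeval_X, hp, h, pderiv_X_self, map_one]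
    · simp only [map_mul, pderiv_mul, map_add, aeval_X, hp, h' l hl, pderiv_X_of_ne hl, map_zero]

/-- Restriction of polynomial functions to the subspace where the second group of coordinates
vanishes. -/
def restrictInl (R : Type*) [CommRing R] (n m : ℕ) :
    MvPolynomial (Fin n ⊕ Fin m) R →ₐ[R] MvPolynomial (Fin n) R :=
  aeval (Sum.elim X 0)

/-- Restriction of polynomial functions to the subspace where the first group of coordinates
vanishes. -/
def restrictInr (R : Type*) [CommRing R] (n m : ℕ) :
    MvPolynomial (Fin n ⊕ Fin m) R →ₐ[R] MvPolynomial (Fin m) R :=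
  aeval (Sum.elim 0 X)

section restrict

variable {R : Type*} [CommRing R] {a b : ℕ}

@[simp] lemma restrictInl_X_inl (i : Fin a) : restrictInl R a b (X (Sum.inl i)) = X i := by
  simp [restrictInl]

@[simp] lemma restrictInl_X_inr (i : Fin b) : restrictInl R a b (X (Sum.inr i)) = 0 := by
  simp [restrictInl]

@[simp] lemma restrictInr_X_inl (i : Fin a) : restrictInr R a b (X (Sum.inl i)) = 0 := by
  simp [restrictInr]

@[simp] lemma restrictInr_X_inr (i : Fin b) : restrictInr R a b (X (Sum.inr i)) = X i := by
  simp [restrictInr]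

lemma restrictInl_rename (p : MvPolynomial (Fin a) R) :
    restrictInl R a b (rename Sum.inl p) = p := by
  rw [restrictInl, aeval_rename, Sum.elim_comp_inl, aeval_X_left_apply]

lemma restrictInr_rename (p : MvPolynomial (Fin b) R) :
    restrictInr R a b (rename Sum.inr p) = p := by
  rw [restrictInr, aeval_rename, Sum.elim_comp_inr, aeval_X_left_apply]

lemma pderiv_restrictInl (i : Fin a) (p : MvPolynomial (Fin a ⊕ Fin b) R) :
    pderiv i (restrictInl R a b p) = restrictInl R a b (pderiv (Sum.inl i) p) := by
  refine pderiv_aeval_of_pderiv _ i (Sum.inl i) (by simp) ?_ p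
  rintro (l | l) hl
  · exact pderiv_X_of_ne fun h => hl (congrArg _ h)
  · simp

lemma pderiv_restrictInr (i : Fin b) (p : MvPolynomial (Fin a ⊕ Fin b) R) :
    pderiv i (restrictInr R a b p) = restrictInr R a b (pderiv (Sum.inr i) p) := by
  refine pderiv_aeval_of_pderiv _ i (Sum.inr i) (by simp) ?_ p
  rintro (l | l) hl
  · simp
  · exact pderiv_X_of_ne fun h => hl (congrArg _ h)

lemma weight_bigrad (s : Fin a ⊕ Fin b →₀ ℕ) :
    Finsupp.weight (bigrad a b) s = (∑ i, s (Sum.inl i), ∑ j, s (Sum.inr j)) := by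
  rw [Finsupp.weight_apply, Finsupp.sum_fintype s (fun i c => c • bigrad a b i) (fun _ => zero_smul _ _)]
  simp [Fintype.sum_sum_type, bigrad, Prod.ext_iff, Prod.fst_sum, Prod.snd_sum]

lemma restrictInl_eq_zero {t : MvPolynomial (Fin a ⊕ Fin b) R} {d : ℕ × ℕ} (hd : 0 < d.2)
    (ht : IsWeightedHomogeneous (bigrad a b) t d) : restrictInl R a b t = 0 := by
  refine aeval_eq_zero_of_support _ t fun s hs => ?_
  have h := ht hs
  rw [weight_bigrad] at h
  subst h
  have hd' : ∑ j, s (Sum.inr j) ≠ 0 := hd.ne'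
  obtain ⟨j, -, hj⟩ := Finset.exists_ne_zero_of_sum_ne_zero hd'
  exact ⟨Sum.inr j, hj, rfl⟩

lemma restrictInr_eq_zero {t : MvPolynomial (Fin a ⊕ Fin b) R} {d : ℕ × ℕ} (hd : 0 < d.1)
    (ht : IsWeightedHomogeneous (bigrad a b) t d) : restrictInr R a b t = 0 := by
  refine aeval_eq_zero_of_support _ t fun s hs => ?_
  have h := ht hs
  rw [weight_bigrad] at h
  subst h
  have hd' : ∑ i, s (Sum.inl i) ≠ 0 := hd.ne'
  obtain ⟨j, -, hj⟩ := Finset.exists_ne_zero_of_sum_ne_zero hd'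
  exact ⟨Sum.inl j, hj, rfl⟩

lemma rename_restrictInl {t : MvPolynomial (Fin a ⊕ Fin b) R} {d : ℕ × ℕ} (hd : d.2 = 0)
    (ht : IsWeightedHomogeneous (bigrad a b) t d) :
    rename Sum.inl (restrictInl R a b t) = t := by
  rw [restrictInl, ← AlgHom.comp_apply, comp_aeval]
  refine aeval_eq_self_of_support _ t fun s hs i hi => ?_
  have h := ht hs
  rw [weight_bigrad] at h
  rw [← h] at hd
  rcases i with i | j
  · simp
  · exact absurd (Finset.sum_eq_zero_iff.mp hd j (Finset.mem_univ j)) hi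

lemma rename_restrictInr {t : MvPolynomial (Fin a ⊕ Fin b) R} {d : ℕ × ℕ} (hd : d.1 = 0)
    (ht : IsWeightedHomogeneous (bigrad a b) t d) :
    rename Sum.inr (restrictInr R a b t) = t := by
  rw [restrictInr, ← AlgHom.comp_apply, comp_aeval]
  refine aeval_eq_self_of_support _ t fun s hs i hi => ?_
  have h := ht hs
  rw [weight_bigrad] at h
  rw [← h] at hd
  rcases i with i | j
  · exact absurd (Finset.sum_eq_zero_iff.mp hd i (Finset.mem_univ i)) hi
  · simp

/-- A submodule containing every component that is not fixed by the projection `π` contains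
`p - π p`, as soon as `π` kills these components. -/
lemma sub_mem_of_components (N : Submodule R (MvPolynomial (Fin a ⊕ Fin b) R))
    (π : MvPolynomial (Fin a ⊕ Fin b) R →ₗ[R] MvPolynomial (Fin a ⊕ Fin b) R)
    (p : MvPolynomial (Fin a ⊕ Fin b) R)
    (h : ∀ d, π (weightedHomogeneousComponent (bigrad a b) d p) =
        weightedHomogeneousComponent (bigrad a b) d p ∨
      (π (weightedHomogeneousComponent (bigrad a b) d p) = 0 ∧
        weightedHomogeneousComponent (bigrad a b) d p ∈ N)) : p - π p ∈ N := by
  have hsum : p = ∑ e ∈ (weightedHomogeneousComponent_finsupp (w := bigrad a b) p).toFinset,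
      weightedHomogeneousComponent (bigrad a b) e p := by
    conv_lhs => rw [← finsum_weightedHomogeneousComponent (bigrad a b) p]
    exact finsum_eq_sum _ _
  have hsub : p - π p =
      ∑ e ∈ (weightedHomogeneousComponent_finsupp (w := bigrad a b) p).toFinset,
        (weightedHomogeneousComponent (bigrad a b) e p -
          π (weightedHomogeneousComponent (bigrad a b) e p)) := by
    rw [Finset.sum_sub_distrib, ← map_sum, ← hsum]
  rw [hsub]
  refine Submodule.sum_mem _ fun e _ => ?_
  rcases h e with h1 | ⟨h1, h2⟩
  · rw [h1, sub_self]
    exact N.zero_mem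
  · rwa [h1, sub_zero]

end restrict

/-! ### Invariants of the semi-direct product -/

lemma brkSD_eq_add (w z : q × V) : brkSD w z = brkSD (w.1, 0) z + brkSD (0, w.2) z := by
  simp [brkSD, sub_eq_add_neg]

/-- The matrix of `ad w` in the basis of `k` given by `bq` and `bV`. -/
def adMatrix (bq : Basis (Fin n) 𝕜 q) (bV : Basis (Fin m) 𝕜 V) (w : q × V)
    (i j : Fin n ⊕ Fin m) : 𝕜 :=
  (bq.prod bV).repr (brkSD w (bq.prod bV j)) i

lemma adDerivK_eq (bq : Basis (Fin n) 𝕜 q) (bV : Basis (Fin m) 𝕜 V) (w : q × V)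
    (p : MvPolynomial (Fin n ⊕ Fin m) 𝕜) :
    adDerivK bq bV w p = linDeriv (adMatrix bq bV w) p := rfl

lemma coadDerivK_eq (bq : Basis (Fin n) 𝕜 q) (bV : Basis (Fin m) 𝕜 V) (w : q × V)
    (p : MvPolynomial (Fin n ⊕ Fin m) 𝕜) :
    coadDerivK bq bV w p = linDeriv (fun i j => adMatrix bq bV w j i) p := rfl

lemma adMatrix_eq_add (bq : Basis (Fin n) 𝕜 q) (bV : Basis (Fin m) 𝕜 V) (w : q × V)
    (i j : Fin n ⊕ Fin m) :
    adMatrix bq bV w i j = adMatrix bq bV (w.1, 0) i j + adMatrix bq bV (0, w.2) i j := by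
  unfold adMatrix
  rw [brkSD_eq_add, map_add, Finsupp.add_apply]

/-- `ad (x, 0)` preserves both summands of `k = q × V`. -/
lemma bigrad_eq_of_adMatrix_left (bq : Basis (Fin n) 𝕜 q) (bV : Basis (Fin m) 𝕜 V) (x : q)
    (i j : Fin n ⊕ Fin m) (h : adMatrix bq bV (x, 0) i j ≠ 0) :
    bigrad n m i = bigrad n m j := by
  rcases i with i | i <;> rcases j with j | j <;> first | rfl | (exfalso; apply h)
  all_goals simp [adMatrix, brkSD]

/-- `ad (0, v)` maps `q` to `V` and kills `V`. -/
lemma bigrad_of_adMatrix_right (bq : Basis (Fin n) 𝕜 q) (bV : Basis (Fin m) 𝕜 V) (v : V)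
    (i j : Fin n ⊕ Fin m) (h : adMatrix bq bV (0, v) i j ≠ 0) :
    bigrad n m i = (0, 1) ∧ bigrad n m j = (1, 0) := by
  rcases i with i | i <;> rcases j with j | j <;>
    first | exact ⟨rfl, rfl⟩ | (exfalso; apply h)
  all_goals simp [adMatrix, brkSD]

lemma IsAdInvK.component {bq : Basis (Fin n) 𝕜 q} {bV : Basis (Fin m) 𝕜 V}
    {p : MvPolynomial (Fin n ⊕ Fin m) 𝕜} (hp : IsAdInvK bq bV p) (d : ℕ × ℕ) :
    IsAdInvK bq bV (weightedHomogeneousComponent (bigrad n m) d p) := by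
  intro w
  have hsplit : adMatrix bq bV w =
      fun i j => adMatrix bq bV (w.1, 0) i j + adMatrix bq bV (0, w.2) i j := by
    funext i j
    exact adMatrix_eq_add bq bV w i j
  rw [adDerivK_eq, hsplit, linDeriv_add,
    linDeriv_component (bigrad n m) 0 0 (adMatrix bq bV (w.1, 0)) _ (hp (w.1, 0)) d,
    linDeriv_component (bigrad n m) (0, 1) (1, 0) (adMatrix bq bV (0, w.2)) _ (hp (0, w.2)) d, add_zero]
  · intro i j h
    obtain ⟨h1, h2⟩ := bigrad_of_adMatrix_right bq bV w.2 i j h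
    rw [h1, h2]
    rfl
  · intro i j h
    rw [bigrad_eq_of_adMatrix_left bq bV w.1 i j h]

lemma IsCoadInvK.component {bq : Basis (Fin n) 𝕜 q} {bV : Basis (Fin m) 𝕜 V}
    {p : MvPolynomial (Fin n ⊕ Fin m) 𝕜} (hp : IsCoadInvK bq bV p) (d : ℕ × ℕ) :
    IsCoadInvK bq bV (weightedHomogeneousComponent (bigrad n m) d p) := by
  intro w
  have hsplit : (fun i j => adMatrix bq bV w j i) =
      fun i j => adMatrix bq bV (w.1, 0) j i + adMatrix bq bV (0, w.2) j i := by
    funext i j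
    exact adMatrix_eq_add bq bV w j i
  rw [coadDerivK_eq, hsplit,
    linDeriv_add (fun i j => adMatrix bq bV (w.1, 0) j i) (fun i j => adMatrix bq bV (0, w.2) j i),
    linDeriv_component (bigrad n m) 0 0 (fun i j => adMatrix bq bV (w.1, 0) j i) _
      (hp (w.1, 0)) d,
    linDeriv_component (bigrad n m) (1, 0) (0, 1) (fun i j => adMatrix bq bV (0, w.2) j i) _
      (hp (0, w.2)) d, add_zero]
  · intro i j h
    obtain ⟨h1, h2⟩ := bigrad_of_adMatrix_right bq bV w.2 j i h
    rw [h1, h2]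
    rfl
  · intro i j h
    rw [bigrad_eq_of_adMatrix_left bq bV w.1 j i h]

lemma IsAdInvK.one (bq : Basis (Fin n) 𝕜 q) (bV : Basis (Fin m) 𝕜 V) :
    IsAdInvK bq bV 1 := by
  intro w
  simp [adDerivK]

lemma IsCoadInvK.one (bq : Basis (Fin n) 𝕜 q) (bV : Basis (Fin m) 𝕜 V) :
    IsCoadInvK bq bV 1 := by
  intro w
  simp [coadDerivK]

/-- The restriction to `q` intertwines the actions of `(x, 0)` on `𝕜[k]` and of `x` on `𝕜[q]`. -/
lemma adDerivQ_restrictInl (bq : Basis (Fin n) 𝕜 q) (bV : Basis (Fin m) 𝕜 V) (x : q)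
    (p : MvPolynomial (Fin n ⊕ Fin m) 𝕜) :
    adDerivQ bq x (restrictInl 𝕜 n m p) = restrictInl 𝕜 n m (adDerivK bq bV (x, 0) p) := by
  simp [adDerivQ, adDerivK, Fintype.sum_sum_type, brkSD, pderiv_restrictInl]

/-- The restriction to `V*` intertwines the actions of `(x, 0)` on `𝕜[k*]` and of `x` on
`𝕜[V*]`. -/
lemma derivVdual_restrictInr (bq : Basis (Fin n) 𝕜 q) (bV : Basis (Fin m) 𝕜 V) (x : q)
    (p : MvPolynomial (Fin n ⊕ Fin m) 𝕜) :
    derivVdual bV x (restrictInr 𝕜 n m p) = restrictInr 𝕜 n m (coadDerivK bq bV (x, 0) p) := by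
  simp [derivVdual, coadDerivK, linPolyK, Fintype.sum_sum_type, brkSD, pderiv_restrictInr]

lemma restrictInl_of_mem_J₁ {bq : Basis (Fin n) 𝕜 q} {bV : Basis (Fin m) 𝕜 V}
    {p : MvPolynomial (Fin n ⊕ Fin m) 𝕜} (hp : p ∈ J₁ bq bV) : restrictInl 𝕜 n m p = 0 := by
  suffices h : J₁ bq bV ≤ LinearMap.ker (restrictInl 𝕜 n m).toLinearMap from h hp
  refine Submodule.span_le.mpr ?_
  rintro _ ⟨s, t, -, -, ⟨d, hd, ht⟩, rfl⟩
  simp [restrictInl_eq_zero hd ht]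

lemma restrictInr_of_mem_J₂ {bq : Basis (Fin n) 𝕜 q} {bV : Basis (Fin m) 𝕜 V}
    {p : MvPolynomial (Fin n ⊕ Fin m) 𝕜} (hp : p ∈ J₂ bq bV) : restrictInr 𝕜 n m p = 0 := by
  suffices h : J₂ bq bV ≤ LinearMap.ker (restrictInr 𝕜 n m).toLinearMap from h hp
  refine Submodule.span_le.mpr ?_
  rintro _ ⟨s, t, -, -, ⟨d, hd, ht⟩, rfl⟩
  simp [restrictInr_eq_zero hd ht]

lemma sub_restrictInl_mem_J₁ {bq : Basis (Fin n) 𝕜 q} {bV : Basis (Fin m) 𝕜 V}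
    {p : MvPolynomial (Fin n ⊕ Fin m) 𝕜} (hp : IsAdInvK bq bV p) :
    p - rename Sum.inl (restrictInl 𝕜 n m p) ∈ J₁ bq bV := by
  refine sub_mem_of_components (J₁ bq bV)
    ((rename Sum.inl).toLinearMap ∘ₗ (restrictInl 𝕜 n m).toLinearMap) p fun d => ?_
  have hd := weightedHomogeneousComponent_isWeightedHomogeneous (w := bigrad n m) d p
  rcases Nat.eq_zero_or_pos d.2 with h | h
  · exact Or.inl (rename_restrictInl h hd)
  · refine Or.inr ⟨?_, Submodule.subset_span
      ⟨1, _, IsAdInvK.one bq bV, hp.component d, ⟨d, h, hd⟩, (one_mul _).symm⟩⟩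
    simp [restrictInl_eq_zero h hd]

lemma sub_restrictInr_mem_J₂ {bq : Basis (Fin n) 𝕜 q} {bV : Basis (Fin m) 𝕜 V}
    {p : MvPolynomial (Fin n ⊕ Fin m) 𝕜} (hp : IsCoadInvK bq bV p) :
    p - rename Sum.inr (restrictInr 𝕜 n m p) ∈ J₂ bq bV := by
  refine sub_mem_of_components (J₂ bq bV)
    ((rename Sum.inr).toLinearMap ∘ₗ (restrictInr 𝕜 n m).toLinearMap) p fun d => ?_
  have hd := weightedHomogeneousComponent_isWeightedHomogeneous (w := bigrad n m) d p
  rcases Nat.eq_zero_or_pos d.1 with h | h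
  · exact Or.inl (rename_restrictInr h hd)
  · refine Or.inr ⟨?_, Submodule.subset_span
      ⟨1, _, IsCoadInvK.one bq bV, hp.component d, ⟨d, h, hd⟩, (one_mul _).symm⟩⟩
    simp [restrictInr_eq_zero h hd]

theorem semidirect_invariants_direct_sum_decomposition
    (bq : Basis (Fin n) 𝕜 q) (bV : Basis (Fin m) 𝕜 V) :
    -- 𝕜[k]^K = i_q(𝕜[q]^Q) ⊕ J₁ :
    (∀ p : MvPolynomial (Fin n ⊕ Fin m) 𝕜, IsAdInvK bq bV p →
      ∃! z : MvPolynomial (Fin n) 𝕜 × MvPolynomial (Fin n ⊕ Fin m) 𝕜,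
        IsAdInvQ bq z.1 ∧ z.2 ∈ J₁ bq bV ∧ p = rename Sum.inl z.1 + z.2) ∧
    -- 𝕜[k*]^K = i_{V*}(𝕜[V*]^Q) ⊕ J₂ :
    (∀ p : MvPolynomial (Fin n ⊕ Fin m) 𝕜, IsCoadInvK bq bV p →
      ∃! z : MvPolynomial (Fin m) 𝕜 × MvPolynomial (Fin n ⊕ Fin m) 𝕜,
        IsInvVdual (q := q) bV z.1 ∧ z.2 ∈ J₂ bq bV ∧ p = rename Sum.inr z.1 + z.2) := by
  refine ⟨fun p hp => ?_, fun p hp => ?_⟩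
  · refine ⟨(restrictInl 𝕜 n m p, p - rename Sum.inl (restrictInl 𝕜 n m p)),
      ⟨fun x => ?_, sub_restrictInl_mem_J₁ hp, (add_sub_cancel _ _).symm⟩, ?_⟩
    · change adDerivQ bq x (restrictInl 𝕜 n m p) = 0
      rw [adDerivQ_restrictInl bq bV, hp (x, 0), map_zero]
    · rintro ⟨p₀, j⟩ ⟨-, hj, hpj⟩
      have h : restrictInl 𝕜 n m p = p₀ := by
        rw [hpj, map_add, restrictInl_rename, restrictInl_of_mem_J₁ hj, add_zero]
      rw [h]
      exact Prod.ext rfl (eq_sub_of_add_eq' hpj.symm)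
  · refine ⟨(restrictInr 𝕜 n m p, p - rename Sum.inr (restrictInr 𝕜 n m p)),
      ⟨fun x => ?_, sub_restrictInr_mem_J₂ hp, (add_sub_cancel _ _).symm⟩, ?_⟩
    · change derivVdual bV x (restrictInr 𝕜 n m p) = 0
      rw [derivVdual_restrictInr bq bV, hp (x, 0), map_zero]
    · rintro ⟨p₀, j⟩ ⟨-, hj, hpj⟩
      have h : restrictInr 𝕜 n m p = p₀ := by
        rw [hpj, map_add, restrictInr_rename, restrictInr_of_mem_J₂ hj, add_zero]
      rw [h]
      exact Prod.ext rfl (eq_sub_of_add_eq' hpj.symm)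

end
end
end
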